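/- Let ⟨V,E,d⟩ be a multi-weighted game graph in which every cycle contains at least one Player-1 vertex, and let B := (4|V|·‖E‖)^{2(d+2)³}. Player 1 wins the bounding game Γ⟨V,E,d⟩ from a vertex v₀ if and only if Player 1 has a strategy from v₀ such that every consistent play ρ satisfies ‖w(ρ|ₙ)‖ ≤ B for all n; consequently the bounding game is equivalent to a safety (reachability) game in which Player 2 attempts to see the norm of the total weight exceed B. -/

import Mathlib

/-! Multi-weighted game graphs, plays, strategies, energy and bounding games. -/

/-- A configuration: a vertex together with an accumulated weight vector. -/
abbrev Conf (V : Type) (d : ℕ) := V × (Fin d → ℤ)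

/-- A multi-weighted game graph: Player-1 vertices, a finite set of
weighted edges, such that every vertex has an outgoing edge. -/
structure MWG (V : Type) [Fintype V] [DecidableEq V] (d : ℕ) where
  P1 : Finset V
  E : Set (V × (Fin d → ℤ) × V)
  finE : E.Finite
  serial : ∀ v : V, ∃ u v', (v, u, v') ∈ E

variable {V : Type} [Fintype V] [DecidableEq V] {d : ℕ}

/-- The norm of an integer vector: max of absolute values of entries. -/
def vnorm {d : ℕ} (u : Fin d → ℤ) : ℕ := Finset.univ.sup fun i => (u i).natAbs

/-- `‖E‖`: the maximal norm of an edge label. -/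
noncomputable def enorm (G : MWG V d) : ℕ := G.finE.toFinset.sup fun e => vnorm e.2.1

/-- One step along an edge of the graph. -/
def Step (G : MWG V d) (c c' : Conf V d) : Prop := (c.1, c'.2 - c.2, c'.1) ∈ G.E

/-- A finite path, as a list of configurations. -/
def IsPathL (G : MWG V d) (π : List (Conf V d)) : Prop := π.Chain' (Step G)

/-- An infinite play from `v₀`, starting with weight `0`. -/
def IsPlay (G : MWG V d) (v₀ : V) (ρ : ℕ → Conf V d) : Prop :=
  ρ 0 = (v₀, 0) ∧ ∀ n, Step G (ρ n) (ρ (n+1))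

/-- A strategy: given the history (past configurations) and the current
configuration, choose a weighted move. -/
abbrev Strat (V : Type) (d : ℕ) := List (Conf V d) → Conf V d → (Fin d → ℤ) × V

/-- A valid strategy for the player owning the vertices in `P` always
chooses an edge of the game graph from the current vertex. -/
def ValidStrat (G : MWG V d) (P : Set V) (σ : Strat V d) : Prop :=
  ∀ h c, IsPathL G (h ++ [c]) → c.1 ∈ P → (c.1, (σ h c).1, (σ h c).2) ∈ G.E

/-- The history of a play before instant `n`. -/
def hist (ρ : ℕ → Conf V d) (n : ℕ) : List (Conf V d) := (List.range n).map ρ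

/-- A play is consistent with strategy `σ` of the player owning `P` if at
every configuration with vertex in `P` the next configuration is obtained
by playing the edge prescribed by `σ`. -/
def Consistent (P : Set V) (σ : Strat V d) (ρ : ℕ → Conf V d) : Prop :=
  ∀ n, (ρ n).1 ∈ P →
    ρ (n+1) = ((σ (hist ρ n) (ρ n)).2, (ρ n).2 + (σ (hist ρ n) (ρ n)).1)

/-- Player owning `P` wins the game with payoff `Win` from `v₀`. -/
def Wins (G : MWG V d) (P : Set V) (Win : (ℕ → Conf V d) → Prop) (v₀ : V) : Prop :=
  ∃ σ : Strat V d, ValidStrat G P σ ∧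
    ∀ ρ, IsPlay G v₀ ρ → Consistent P σ ρ → Win ρ

/-- Player 1's winning condition in the energy game with initial credit `b`. -/
def EnergyOK (b : Fin d → ℕ) (ρ : ℕ → Conf V d) : Prop :=
  ∀ n i, 0 ≤ (b i : ℤ) + (ρ n).2 i

/-- Player 1's winning condition in the bounding game: the norms of the
total weights of all the finite prefixes are bounded. -/
def BoundedPlay (ρ : ℕ → Conf V d) : Prop :=
  ∃ B : ℕ, ∀ n, vnorm ((ρ n).2) ≤ B

def P1WinsEnergy (G : MWG V d) (b : Fin d → ℕ) (v₀ : V) : Prop :=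
  Wins G (G.P1 : Set V) (EnergyOK b) v₀

def P2WinsEnergy (G : MWG V d) (b : Fin d → ℕ) (v₀ : V) : Prop :=
  Wins G {v | v ∉ G.P1} (fun ρ => ¬ EnergyOK b ρ) v₀

def P1WinsBounding (G : MWG V d) (v₀ : V) : Prop :=
  Wins G (G.P1 : Set V) BoundedPlay v₀

def P2WinsBounding (G : MWG V d) (v₀ : V) : Prop :=
  Wins G {v | v ∉ G.P1} (fun ρ => ¬ BoundedPlay ρ) v₀

/-- The negative unit vector `-e i`. -/
def negUnit (d : ℕ) (i : Fin d) : Fin d → ℤ := fun j => if j = i then -1 else 0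

/-- The lossy game graph: add a self-loop labelled `-e i` at each Player-1
vertex, for every coordinate `i`. -/
def lossy (G : MWG V d) : MWG V d where
  P1 := G.P1
  E := G.E ∪ (fun p : V × Fin d => (p.1, negUnit d p.2, p.1)) '' {p | p.1 ∈ G.P1}
  finE := G.finE.union ((Set.toFinite _).image _)
  serial := fun v => by
    obtain ⟨u, v', h⟩ := G.serial v
    exact ⟨u, v', Set.mem_union_left _ h⟩

/-- Every cycle of the game graph contains at least one Player-1 vertex. -/
def EveryCycleHasP1 (G : MWG V d) : Prop :=
  ∀ (n : ℕ) (c : ℕ → Conf V d), 0 < n → (∀ j < n, Step G (c j) (c (j+1))) →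
    (c 0).1 = (c n).1 → ∃ j < n, (c j).1 ∈ G.P1

/-! Player 2 wins the bounding game exactly when she wins a finite cycle game in which she announces
a list of integer vectors before each move and in which the first cycle closed must be escaping:
some prefix `p ++ [h]` of all the lists announced along it is such that the weight of the cycle is
orthogonal to `p` and positive along `h`.

If Player 2 wins the cycle game, she plays it again and again, cutting out each cycle once it is
closed. All cycles are then escaping and, were the play bounded, the weights of the cycles would
eventually be orthogonal to longer and longer prefixes of one and the same list, which is absurd.

Otherwise Player 1 prevents all escaping cycles, even against lists chosen by a controller that
reads the weights of the cycles cut out so far. The controller announces approximate directions of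
the accumulated weight when this weight is large, so that the weights of the next cycles bring it
back. Recursion on the dimension, through the hyperplane orthogonal to the first direction, and
simultaneous Diophantine approximation keep everything within the announced hypercube. -/

namespace BoundingGame

open Filter Matrix

/-! ### Integer vectors -/

theorem vnorm_le_iff {u : Fin d → ℤ} {B : ℕ} : vnorm u ≤ B ↔ ∀ i, |u i| ≤ (B : ℤ) := by
  simp only [vnorm, Finset.sup_le_iff, Finset.mem_univ, true_imp_iff, Int.abs_eq_natAbs,
    Nat.cast_le]

theorem abs_le_vnorm (u : Fin d → ℤ) (i : Fin d) : |u i| ≤ (vnorm u : ℤ) :=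
  vnorm_le_iff.1 le_rfl i

@[simp]
theorem vnorm_zero : vnorm (0 : Fin d → ℤ) = 0 :=
  Nat.le_zero.1 (vnorm_le_iff.2 (by simp))

@[simp]
theorem vnorm_neg (u : Fin d → ℤ) : vnorm (-u) = vnorm u := by
  simp [vnorm]

theorem vnorm_add_le (u v : Fin d → ℤ) : vnorm (u + v) ≤ vnorm u + vnorm v := by
  refine vnorm_le_iff.2 fun i => (abs_add_le _ _).trans ?_
  push_cast
  exact add_le_add (abs_le_vnorm u i) (abs_le_vnorm v i)

theorem vnorm_list_sum_le {N : ℕ} {l : List (Fin d → ℤ)} (hl : ∀ u ∈ l, vnorm u ≤ N) :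
    vnorm l.sum ≤ l.length * N := by
  calc vnorm l.sum ≤ (l.map vnorm).sum := List.le_sum_of_subadditive vnorm vnorm_zero.le
        vnorm_add_le l
    _ ≤ (l.map vnorm).length • N :=
        List.sum_le_card_nsmul _ _ (by simpa only [List.forall_mem_map] using hl)
    _ = l.length * N := by rw [List.length_map, smul_eq_mul]

theorem abs_dotProduct_le {u v : Fin d → ℤ} {A B : ℤ} (hu : ∀ i, |u i| ≤ A)
    (hv : ∀ i, |v i| ≤ B) : |u ⬝ᵥ v| ≤ d * (A * B) := by
  calc |u ⬝ᵥ v| ≤ ∑ i, |u i * v i| := Finset.abs_sum_le_sum_abs _ _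
    _ ≤ ∑ _i : Fin d, A * B := Finset.sum_le_sum fun i _ => by
        rw [abs_mul]
        exact mul_le_mul (hu i) (hv i) (abs_nonneg _) ((abs_nonneg _).trans (hu i))
    _ = d * (A * B) := by simp

theorem sq_vnorm_le_dotProduct_self (a : Fin d → ℤ) : (vnorm a : ℤ) ^ 2 ≤ a ⬝ᵥ a := by
  have hnonneg : 0 ≤ a ⬝ᵥ a := Finset.sum_nonneg fun i _ => mul_self_nonneg _
  have hle : vnorm a ≤ Nat.sqrt (a ⬝ᵥ a).toNat := by
    refine Finset.sup_le fun i _ => Nat.le_sqrt.2 ?_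
    zify
    rw [abs_mul_abs_self, Int.toNat_of_nonneg hnonneg]
    exact Finset.single_le_sum (f := fun i => a i * a i) (fun i _ => mul_self_nonneg _)
      (Finset.mem_univ i)
  have hsq := Nat.le_sqrt'.1 hle
  zify at hsq
  rwa [Int.toNat_of_nonneg hnonneg] at hsq

/-! ### Rational approximation of directions -/

/-- Dirichlet's simultaneous approximation theorem. -/
theorem exists_simultaneous_approx {K ι : Type*} [Field K] [LinearOrder K]
    [IsStrictOrderedRing K] [FloorRing K] [Fintype ι] (ξ : ι → K) {M : ℕ} (hM : 0 < M) :
    ∃ q : ℕ, 0 < q ∧ q ≤ M ^ Fintype.card ι ∧ ∃ h : ι → ℤ, ∀ i, M * |q * ξ i - h i| < 1 := by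
  classical
  have hM' : (0 : K) < M := by exact_mod_cast hM
  have hbox (x : K) : ⌊M * Int.fract x⌋.toNat < M := by
    have hlt : ⌊M * Int.fract x⌋ < (M : ℤ) := by
      rw [Int.floor_lt, Int.cast_natCast]
      exact mul_lt_of_lt_one_right hM' (Int.fract_lt_one x)
    omega
  have hbox_nonneg (x : K) : 0 ≤ ⌊M * Int.fract x⌋ :=
    Int.floor_nonneg.2 (mul_nonneg hM'.le (Int.fract_nonneg x))
  let box : Fin (M ^ Fintype.card ι + 1) → ι → Fin M := fun q i => ⟨_, hbox ((q : ℕ) * ξ i)⟩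
  obtain ⟨q₁, q₂, hne, hq⟩ := Fintype.exists_ne_map_eq_of_card_lt box (by simp)
  wlog hlt : q₁ < q₂ generalizing q₁ q₂
  · exact this q₂ q₁ hne.symm hq.symm (lt_of_le_of_ne (not_lt.1 hlt) hne.symm)
  have hlt' : (q₁ : ℕ) < q₂ := hlt
  refine ⟨q₂ - q₁, by omega, by omega, fun i => ⌊q₂ * ξ i⌋ - ⌊q₁ * ξ i⌋, fun i => ?_⟩
  have hfloor : ⌊M * Int.fract ((q₂ : ℕ) * ξ i)⌋ = ⌊M * Int.fract ((q₁ : ℕ) * ξ i)⌋ := by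
    have := congrArg Fin.val (congrFun hq i)
    have h₁ := hbox_nonneg ((q₁ : ℕ) * ξ i)
    have h₂ := hbox_nonneg ((q₂ : ℕ) * ξ i)
    simp only [box] at this
    omega
  have hclose := Int.abs_sub_lt_one_of_floor_eq_floor hfloor
  rw [← mul_sub, abs_mul, abs_of_pos hM', Int.fract, Int.fract] at hclose
  convert hclose using 3
  push_cast [Nat.cast_sub hlt'.le]
  ring

/-- The integer vector `h` approximates the direction of `a`: for some denominator `1 ≤ q ≤ H`,
`h / q` is within `1 / (M q)` of `a / ‖a‖` coordinatewise, and `‖h‖ ≤ q`. The inequality is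
multiplied out to stay in `ℤ`. -/
structure ApproxDirection (M H : ℕ) (q : ℤ) (a h : Fin d → ℤ) : Prop where
  one_le : 1 ≤ q
  le : q ≤ H
  abs_le : ∀ i, |h i| ≤ q
  close : ∀ i, M * |q * a i - vnorm a * h i| ≤ vnorm a

theorem exists_approxDirection {M : ℕ} (hM : 0 < M) {a : Fin d → ℤ} (ha : 0 < vnorm a) :
    ∃ q h, ApproxDirection M (M ^ d) q a h := by
  have ha' : (0 : ℚ) < vnorm a := by exact_mod_cast ha
  obtain ⟨q, hq_pos, hq_le, h, hclose⟩ :=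
    exists_simultaneous_approx (fun i => (a i / vnorm a : ℚ)) hM
  rw [Fintype.card_fin] at hq_le
  have hclose' (i : Fin d) : (M : ℤ) * |q * a i - vnorm a * h i| < vnorm a := by
    have hscale : (q : ℚ) * (a i / vnorm a) - h i = (q * a i - vnorm a * h i) / vnorm a := by
      field_simp
    have hi := hclose i
    rw [hscale, abs_div, abs_of_pos ha', ← mul_div_assoc, div_lt_one ha'] at hi
    exact_mod_cast hi
  refine ⟨q, h, by exact_mod_cast hq_pos, by exact_mod_cast hq_le, fun i => ?_,
    fun i => (hclose' i).le⟩
  have hdist : |q * a i - vnorm a * h i| < vnorm a :=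
    (le_mul_of_one_le_left (abs_nonneg _) (by exact_mod_cast hM)).trans_lt (hclose' i)
  have hqa : |q * a i| ≤ q * vnorm a := by
    rw [abs_mul, Nat.abs_cast]
    exact mul_le_mul_of_nonneg_left (abs_le_vnorm a i) (by positivity)
  have hmul : (vnorm a : ℤ) * |h i| < vnorm a * (q + 1) := by
    calc (vnorm a : ℤ) * |h i| = |vnorm a * h i| := by rw [abs_mul, Nat.abs_cast]
      _ ≤ |q * a i| + |q * a i - vnorm a * h i| := by
          linarith [abs_sub_abs_le_abs_sub (vnorm a * h i) (q * a i),
            abs_sub_comm (vnorm a * h i) (q * a i)]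
      _ < vnorm a * (q + 1) := by linarith
  have := lt_of_mul_lt_mul_left hmul (by positivity)
  omega

namespace ApproxDirection

variable {M H : ℕ} {q : ℤ} {a h : Fin d → ℤ}

theorem dotProduct_close (ha : ApproxDirection M H q a h) (x : Fin d → ℤ) :
    M * |q * (a ⬝ᵥ x) - vnorm a * (h ⬝ᵥ x)| ≤ d * (vnorm a * vnorm x) := by
  have hsplit : q * (a ⬝ᵥ x) - vnorm a * (h ⬝ᵥ x) = (q • a - (vnorm a : ℤ) • h) ⬝ᵥ x := by
    simp only [sub_dotProduct, smul_dotProduct, smul_eq_mul]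
  calc M * |q * (a ⬝ᵥ x) - vnorm a * (h ⬝ᵥ x)|
      = |((M : ℤ) • (q • a - (vnorm a : ℤ) • h)) ⬝ᵥ x| := by
        rw [hsplit, smul_dotProduct, smul_eq_mul, abs_mul, Nat.abs_cast]
    _ ≤ d * (vnorm a * vnorm x) := abs_dotProduct_le (fun i => by
        simpa only [Pi.smul_apply, Pi.sub_apply, smul_eq_mul, abs_mul, Nat.abs_cast]
          using ha.close i) (abs_le_vnorm x)

theorem dotProduct_ne_zero (ha : ApproxDirection M H q a h) (hdM : d < M) (hpos : 0 < vnorm a) :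
    h ⬝ᵥ a ≠ 0 := by
  intro horth
  have hclose := ha.dotProduct_close a
  rw [horth, mul_zero, sub_zero] at hclose
  have hpos' : (0 : ℤ) < vnorm a ^ 2 := by positivity
  have hself : (vnorm a : ℤ) ^ 2 ≤ q * (a ⬝ᵥ a) := by
    nlinarith [sq_vnorm_le_dotProduct_self a, ha.one_le]
  have hM : (M : ℤ) * vnorm a ^ 2 ≤ d * vnorm a ^ 2 := by
    calc (M : ℤ) * vnorm a ^ 2 ≤ M * |q * (a ⬝ᵥ a)| :=
          mul_le_mul_of_nonneg_left (hself.trans (le_abs_self _)) (by positivity)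
      _ ≤ d * vnorm a ^ 2 := by rwa [sq]
  have hle : (M : ℤ) ≤ d := le_of_mul_le_mul_right hM hpos'
  omega

theorem dotProduct_self_add_le (ha : ApproxDirection M H q a h) (hM : 0 < M) {δ : Fin d → ℤ}
    {K : ℕ} (hδM : 4 * d * vnorm δ ≤ M * K) (hδa : H * d * vnorm δ ^ 2 ≤ vnorm a * K)
    (hdescent : 4 * (h ⬝ᵥ δ) ≤ -3 * K) :
    (a + δ) ⬝ᵥ (a + δ) ≤ a ⬝ᵥ a := by
  zify at hM hδM hδa
  have hlinear : 4 * (q * (a ⬝ᵥ δ) - vnorm a * (h ⬝ᵥ δ)) ≤ vnorm a * K := by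
    refine le_of_mul_le_mul_left ?_ hM
    calc (M : ℤ) * (4 * (q * (a ⬝ᵥ δ) - vnorm a * (h ⬝ᵥ δ)))
        ≤ 4 * (M * |q * (a ⬝ᵥ δ) - vnorm a * (h ⬝ᵥ δ)|) := by
          nlinarith [le_abs_self (q * (a ⬝ᵥ δ) - vnorm a * (h ⬝ᵥ δ))]
      _ ≤ vnorm a * (4 * d * vnorm δ) := by linarith [ha.dotProduct_close δ]
      _ ≤ vnorm a * (M * K) := mul_le_mul_of_nonneg_left hδM (by positivity)
      _ = M * (vnorm a * K) := by ring
  have hquadratic : q * (δ ⬝ᵥ δ) ≤ vnorm a * K := by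
    have hδδ : δ ⬝ᵥ δ ≤ d * (vnorm δ * vnorm δ) :=
      (le_abs_self _).trans (abs_dotProduct_le (abs_le_vnorm δ) (abs_le_vnorm δ))
    calc q * (δ ⬝ᵥ δ) ≤ H * (d * (vnorm δ * vnorm δ)) :=
          mul_le_mul ha.le hδδ ((sq_nonneg _).trans (sq_vnorm_le_dotProduct_self δ))
            (by positivity)
      _ ≤ vnorm a * K := by linarith
  have hmain : 4 * (vnorm a * (h ⬝ᵥ δ)) ≤ -3 * (vnorm a * K) := by
    linarith [mul_le_mul_of_nonneg_left hdescent (Int.natCast_nonneg (vnorm a))]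
  have hle : q * (2 * (a ⬝ᵥ δ) + δ ⬝ᵥ δ) ≤ q * 0 := by linarith
  have := le_of_mul_le_mul_left hle (by linarith [ha.one_le])
  rw [add_dotProduct, dotProduct_add, dotProduct_add, dotProduct_comm δ a]
  linarith

end ApproxDirection

/-! ### Phases -/

section Phases

variable {α : Type*} (ends : List α → List α → Prop) [DecidableRel ends]

/-- One step of the subdivision of a word into consecutive phases: `s.1` is the concatenation of
the completed phases, `s.2` the current one, and `ends s.1 p` tells whether `p` is complete. -/
def phaseStep (s : List α × List α) (u : α) : List α × List α :=
  if ends s.1 (s.2 ++ [u]) then (s.1 ++ s.2 ++ [u], []) else (s.1, s.2 ++ [u])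

/-- The completed phases of a word, concatenated, followed by its current phase. -/
def phases (us : List α) : List α × List α :=
  us.foldl (phaseStep ends) ([], [])

@[simp]
theorem phases_nil : phases ends [] = ([], []) := rfl

theorem phases_concat (us : List α) (u : α) :
    phases ends (us ++ [u]) = phaseStep ends (phases ends us) u := by
  simp [phases]

theorem phases_append (us : List α) : (phases ends us).1 ++ (phases ends us).2 = us := by
  induction us using List.reverseRecOn with
  | nil => rfl
  | append_singleton us u ih =>
    rw [phases_concat, phaseStep]
    split_ifs
    · simp [ih]
    · simp [← List.append_assoc, ih]

theorem phases_of_prefix {us m : List α} (hm : m <+: (phases ends us).2) :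
    phases ends ((phases ends us).1 ++ m) = ((phases ends us).1, m) := by
  induction us using List.reverseRecOn with
  | nil => simp_all
  | append_singleton us u ih =>
    have happend := phases_append ends (us ++ [u])
    rw [phases_concat, phaseStep] at hm happend ⊢
    split_ifs at hm happend ⊢ with hends
    · obtain rfl : m = [] := List.prefix_nil.1 hm
      rw [happend, phases_concat, phaseStep, if_pos hends]
    · rcases List.prefix_concat_iff.1 hm with rfl | hm
      · rw [happend, phases_concat, phaseStep, if_neg hends]
      · exact ih hm

theorem not_ends_phases {us : List α} (hne : (phases ends us).2 ≠ []) :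
    ¬ ends (phases ends us).1 (phases ends us).2 := by
  cases us using List.reverseRecOn with
  | nil => exact absurd rfl hne
  | append_singleton us u =>
    rw [phases_concat, phaseStep] at hne ⊢
    split_ifs at hne ⊢ with hends
    · exact absurd rfl hne
    · exact hends

theorem phases_fst_induction {P : List α → Prop} (us : List α) (nil : P [])
    (step : ∀ pre mid u, pre ++ (mid ++ [u]) <+: us → phases ends (pre ++ mid) = (pre, mid) →
      ends pre (mid ++ [u]) → P pre → P (pre ++ (mid ++ [u]))) :
    P (phases ends us).1 := by
  induction us using List.reverseRecOn with
  | nil => exact nil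
  | append_singleton us u ih =>
    have hpre := ih fun pre mid u' hprefix =>
      step pre mid u' (hprefix.trans (List.prefix_append _ _))
    have happend := phases_append ends us
    rw [phases_concat, phaseStep]
    split_ifs with hends
    · rw [List.append_assoc]
      exact step _ _ u (by rw [← List.append_assoc, happend]) (by rw [happend]) hends hpre
    · exact hpre

end Phases

/-! ### Controllers of sequences of vectors -/

/-- Lexicographic positivity along the directions `p ++ [h]`: `u` is orthogonal to every vector
of `p`, and has a positive scalar product with `h`. -/
def LexPos (p : List (Fin d → ℤ)) (h u : Fin d → ℤ) : Prop :=
  (∀ g ∈ p, g ⬝ᵥ u = 0) ∧ 0 < h ⬝ᵥ u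

instance (p : List (Fin d → ℤ)) (h : Fin d → ℤ) : DecidablePred (LexPos p h) :=
  fun u => inferInstanceAs (Decidable ((∀ g ∈ p, g ⬝ᵥ u = 0) ∧ 0 < h ⬝ᵥ u))

@[simp]
theorem lexPos_nil {h u : Fin d → ℤ} : LexPos [] h u ↔ 0 < h ⬝ᵥ u := by
  simp [LexPos]

theorem lexPos_cons {g : Fin d → ℤ} {p : List (Fin d → ℤ)} {h u : Fin d → ℤ} :
    LexPos (g :: p) h u ↔ LexPos p h u ∧ g ⬝ᵥ u = 0 := by
  simp only [LexPos, List.forall_mem_cons]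
  tauto

/-- A controller reads the vectors produced so far and demands a list of directions, by
decreasing priority, along which the next vectors should not be lexicographically positive. -/
abbrev Controller (d : ℕ) := List (Fin d → ℤ) → List (Fin d → ℤ)

/-- The sequence `us` obeys the controller `κ` up to `c` violations: over any block `mid` of `us`
throughout which `κ` demands directions starting with `p ++ [h]`, at most `c` vectors are
lexicographically positive along `p ++ [h]`. -/
def Compliant (c : ℕ) (κ : Controller d) (us : List (Fin d → ℤ)) : Prop :=
  ∀ pre mid, pre ++ mid <+: us → ∀ p h,
    (∀ m, m <+: mid → m.length < mid.length → p ++ [h] <+: κ (pre ++ m)) →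
      mid.countP (LexPos p h ·) ≤ c

/-- The controller `κ` keeps within norm `B` the sum of any compliant sequence of vectors of
norm at most `N` from the submodule `F`. -/
def Confines (c N : ℕ) (F : Submodule ℤ (Fin d → ℤ)) (κ : Controller d) (B : ℕ) : Prop :=
  ∀ us : List (Fin d → ℤ), (∀ u ∈ us, vnorm u ≤ N ∧ u ∈ F) → Compliant c κ us → vnorm us.sum ≤ B

theorem prefix_of_prefix_concat {α : Type*} {m l : List α} {y : α} (hm : m <+: l ++ [y])
    (hlen : m.length < (l ++ [y]).length) : m <+: l :=
  (List.prefix_concat_iff.1 hm).resolve_left (by rintro rfl; exact lt_irrefl _ hlen)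

theorem exists_prefix_of_filter_prefix {α : Type*} {P : α → Bool} {l pre mid : List α} {y : α}
    (hprefix : pre ++ (mid ++ [y]) <+: l.filter P) :
    ∃ a b, a ++ (b ++ [y]) <+: l ∧ a.filter P = pre ∧ b.filter P = mid ∧ P y := by
  obtain ⟨t, ht⟩ := hprefix
  simp only [List.append_assoc, List.singleton_append] at ht
  obtain ⟨a, _, rfl, ha, hrest⟩ := List.filter_eq_append_iff.1 ht.symm
  obtain ⟨b, _, rfl, hb, hrest⟩ := List.filter_eq_append_iff.1 hrest
  obtain ⟨b', t', rfl, hb', hy, _⟩ := List.filter_eq_cons_iff.1 hrest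
  refine ⟨a, b ++ b', ⟨t', by simp⟩, ha, ?_, hy⟩
  rw [List.filter_append, hb, List.filter_eq_nil_iff.2 hb', List.append_nil]

theorem Compliant.filter_orthogonal {c : ℕ} {κ κ' : Controller d} {us pre mid : List (Fin d → ℤ)}
    {h : Fin d → ℤ} (hcompliant : Compliant c κ us) (hus : pre ++ mid <+: us)
    (hκ : ∀ m, m <+: mid → m.length < mid.length →
      κ (pre ++ m) = h :: κ' (m.filter (h ⬝ᵥ · = 0))) :
    Compliant c κ' (mid.filter (h ⬝ᵥ · = 0)) := by
  intro pre' mid' hprefix p h' hdemand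
  rcases List.eq_nil_or_concat' mid' with rfl | ⟨mid', y, rfl⟩
  · simp
  obtain ⟨a, b, hab, rfl, rfl, hy⟩ := exists_prefix_of_filter_prefix hprefix
  have hblock : (pre ++ a) ++ (b ++ [y]) <+: us := by
    rw [List.append_assoc]
    exact ((List.prefix_append_right_inj pre).2 hab).trans hus
  have hcount := hcompliant (pre ++ a) (b ++ [y]) hblock (h :: p) h' fun m hm hlen => by
    have hmb := prefix_of_prefix_concat hm hlen
    have ham : a ++ m <+: mid := ((List.prefix_append_right_inj a).2 hm).trans hab
    have hlen' : (a ++ m).length < mid.length := by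
      have := hab.length_le
      simp only [List.length_append] at this hlen ⊢
      omega
    rw [List.append_assoc, hκ _ ham hlen', List.filter_append, List.cons_append,
      List.cons_prefix_cons]
    have hfilter := hmb.filter (h ⬝ᵥ · = 0)
    refine ⟨rfl, hdemand _ (hfilter.trans (List.prefix_append _ _)) ?_⟩
    simpa [Nat.lt_succ_iff] using hfilter.length_le
  have hy' : b.filter (h ⬝ᵥ · = 0) ++ [y] = (b ++ [y]).filter (h ⬝ᵥ · = 0) := by
    rw [List.filter_append, List.filter_singleton, hy, cond_true]
  rw [hy', List.countP_filter]
  simpa only [lexPos_cons, Bool.decide_and] using hcount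

theorem vnorm_sum_le_filter_add {N : ℕ} (h : Fin d → ℤ) {l : List (Fin d → ℤ)}
    (hl : ∀ u ∈ l, vnorm u ≤ N) :
    vnorm l.sum ≤ vnorm (l.filter (h ⬝ᵥ · = 0)).sum +
      (l.countP (h ⬝ᵥ · < 0) + l.countP (0 < h ⬝ᵥ ·)) * N := by
  have hsum := (List.filter_append_perm (h ⬝ᵥ · = 0) l).sum_eq
  have hlength : (l.filter fun u => !decide (h ⬝ᵥ u = 0)).length =
      l.countP (h ⬝ᵥ · < 0) + l.countP (0 < h ⬝ᵥ ·) := by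
    clear hl hsum
    induction l with
    | nil => rfl
    | cons u l ih => rcases lt_trichotomy (h ⬝ᵥ u) 0 with hu | hu | hu <;> grind
  rw [← hsum, List.sum_append, ← hlength]
  exact (vnorm_add_le _ _).trans (Nat.add_le_add_left
    (vnorm_list_sum_le fun u hu => hl u (List.mem_of_mem_filter hu)) _)

theorem dotProduct_sum_le_countP {h : Fin d → ℤ} {C : ℤ} {l : List (Fin d → ℤ)}
    (hl : ∀ u ∈ l, h ⬝ᵥ u ≤ C) :
    h ⬝ᵥ l.sum ≤ -(l.countP (h ⬝ᵥ · < 0) : ℤ) + l.countP (0 < h ⬝ᵥ ·) * C := by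
  induction l with
  | nil => simp
  | cons u l ih =>
    have hu := hl u List.mem_cons_self
    have ih := ih fun v hv => hl v (List.mem_cons_of_mem _ hv)
    rw [List.sum_cons, dotProduct_add, List.countP_cons, List.countP_cons]
    rcases lt_trichotomy (h ⬝ᵥ u) 0 with h_sign | h_sign | h_sign
    · simp only [h_sign, h_sign.not_gt, decide_true, decide_false, if_true, Bool.false_eq_true,
        if_false]
      push_cast
      linarith
    · simp only [h_sign, lt_irrefl, decide_false, Bool.false_eq_true, if_false]
      push_cast
      linarith
    · simp only [h_sign, h_sign.not_gt, decide_true, decide_false, if_true, Bool.false_eq_true,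
        if_false]
      push_cast
      linarith

section Nested

variable {S K : ℕ} {dir : (Fin d → ℤ) → Fin d → ℤ} {κ' : (Fin d → ℤ) → Controller d}

/-- The rule ending a phase `mid` opened at position `a = pre.sum`: at once when `‖a‖ < S`, and
otherwise after `K` vectors of negative scalar product with the direction `dir a`. -/
def PhaseEnds (S K : ℕ) (dir : (Fin d → ℤ) → Fin d → ℤ) (pre mid : List (Fin d → ℤ)) : Prop :=
  vnorm pre.sum < S ∨ K ≤ mid.countP (dir pre.sum ⬝ᵥ · < 0)

instance : DecidableRel (PhaseEnds S K dir) :=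
  fun pre mid => inferInstanceAs
    (Decidable (vnorm pre.sum < S ∨ K ≤ mid.countP (dir pre.sum ⬝ᵥ · < 0)))

/-- In a phase opened far away at position `a`, `nested` gives priority to the direction `dir a`,
and submits the vectors orthogonal to it to the controller `κ' a`. -/
def nested (S K : ℕ) (dir : (Fin d → ℤ) → Fin d → ℤ) (κ' : (Fin d → ℤ) → Controller d) :
    Controller d := fun us =>
  let s := phases (PhaseEnds S K dir) us
  if vnorm s.1.sum < S then []
  else dir s.1.sum :: κ' s.1.sum (s.2.filter (dir s.1.sum ⬝ᵥ · = 0))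

variable {c N H R : ℕ} {F : Submodule ℤ (Fin d → ℤ)} {us pre mid : List (Fin d → ℤ)}

/-- What the directions `dir` and the controllers `κ'`, the latter confining vectors to norm `R`,
have to fulfil for `nested S K dir κ'` to confine vectors of norm at most `N` from `F`. -/
structure NestedSpec (c N H R S K : ℕ) (F : Submodule ℤ (Fin d → ℤ))
    (dir : (Fin d → ℤ) → Fin d → ℤ) (κ' : (Fin d → ℤ) → Controller d) : Prop where
  pos : 0 < 12 * d * N
  c_le : c ≤ N
  N_le : N ≤ K
  R_le : R ≤ K
  le_K : 4 * (N * (d * (H * N))) ≤ K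
  le_S : 9 * d * H * N ^ 2 * K ≤ S
  approx : ∀ a, S ≤ vnorm a → ∃ q, ApproxDirection (12 * d * N) H q a (dir a)
  confines : ∀ a ∈ F, S ≤ vnorm a →
    Confines c N (F ⊓ LinearMap.ker (dotProductEquiv ℤ (Fin d) (dir a))) (κ' a) R

namespace NestedSpec

theorem block_bound (spec : NestedSpec c N H R S K F dir κ')
    (hF : ∀ u ∈ us, vnorm u ≤ N ∧ u ∈ F) (hcompliant : Compliant c (nested S K dir κ') us)
    (hus : pre ++ mid <+: us)
    (hphase : ∀ m, m <+: mid → m.length < mid.length →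
      phases (PhaseEnds S K dir) (pre ++ m) = (pre, m))
    (hfar : S ≤ vnorm pre.sum) (hneg : mid.countP (dir pre.sum ⬝ᵥ · < 0) ≤ K) :
    vnorm mid.sum ≤ 3 * N * K ∧ mid.countP (0 < dir pre.sum ⬝ᵥ ·) ≤ c := by
  set h := dir pre.sum with hh
  have hdemand (m) (hm : m <+: mid) (hlen : m.length < mid.length) :
      nested S K dir κ' (pre ++ m) = h :: κ' pre.sum (m.filter (h ⬝ᵥ · = 0)) := by
    simp only [nested, hphase m hm hlen, if_neg hfar.not_gt, ← hh]
  have hmid : ∀ u ∈ mid, vnorm u ≤ N ∧ u ∈ F := fun u hu =>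
    hF u (hus.subset (List.mem_append_right _ hu))
  have hpreF : pre.sum ∈ F := list_sum_mem fun u hu =>
    (hF u (hus.subset (List.mem_append_left _ hu))).2
  have hpos : mid.countP (0 < h ⬝ᵥ ·) ≤ c := by
    simpa only [lexPos_nil] using hcompliant pre mid hus [] h fun m hm hlen => by
      rw [hdemand m hm hlen]
      exact List.prefix_append [h] _
  have horth : vnorm (mid.filter (h ⬝ᵥ · = 0)).sum ≤ R := by
    refine spec.confines _ hpreF hfar _ (fun u hu => ?_)
      (hcompliant.filter_orthogonal hus hdemand)
    obtain ⟨hu, hu0⟩ := List.mem_filter.1 hu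
    exact ⟨(hmid u hu).1, (hmid u hu).2, by simpa using hu0⟩
  refine ⟨?_, hpos⟩
  have hN : 0 < N := Nat.pos_of_mul_pos_left spec.pos
  calc vnorm mid.sum
      ≤ R + (K + K) * N := (vnorm_sum_le_filter_add h fun u hu => (hmid u hu).1).trans
        (by gcongr; exact hpos.trans (spec.c_le.trans spec.N_le))
    _ ≤ N * K + (K + K) * N := by nlinarith [spec.R_le]
    _ = 3 * N * K := by ring

theorem dotProduct_self_le_of_phaseEnds (spec : NestedSpec c N H R S K F dir κ') {a : Fin d → ℤ}
    (hfar : S ≤ vnorm a) (hN : ∀ u ∈ mid, vnorm u ≤ N) (hmid : vnorm mid.sum ≤ 3 * N * K)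
    (hpos : mid.countP (0 < dir a ⬝ᵥ ·) ≤ c) (hneg : K ≤ mid.countP (dir a ⬝ᵥ · < 0)) :
    (a + mid.sum) ⬝ᵥ (a + mid.sum) ≤ a ⬝ᵥ a := by
  obtain ⟨q, happrox⟩ := spec.approx a hfar
  have hdot : ∀ u ∈ mid, dir a ⬝ᵥ u ≤ d * (H * N) := fun u hu =>
    (le_abs_self _).trans (abs_dotProduct_le (fun i => (happrox.abs_le i).trans happrox.le)
      (vnorm_le_iff.1 (hN u hu)))
  refine happrox.dotProduct_self_add_le (K := K) spec.pos ?_ ?_ ?_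
  · calc 4 * d * vnorm mid.sum ≤ 4 * d * (3 * N * K) := by gcongr
      _ = 12 * d * N * K := by ring
  · calc H * d * vnorm mid.sum ^ 2 ≤ H * d * (3 * N * K) ^ 2 := by gcongr
      _ = 9 * d * H * N ^ 2 * K * K := by ring
      _ ≤ vnorm a * K := by
        gcongr
        exact spec.le_S.trans hfar
  · have hsum := dotProduct_sum_le_countP hdot
    have hpos' : (mid.countP (0 < dir a ⬝ᵥ ·) : ℤ) * (d * (H * N)) ≤ N * (d * (H * N)) := by
      gcongr
      exact hpos.trans spec.c_le
    have hK := spec.le_K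
    zify at hneg hK
    linarith

-- Only a phase opened within norm `S`, which consists of one vector, can increase the Euclidean
-- norm of the sum of the completed phases.
theorem dotProduct_self_phases_le (spec : NestedSpec c N H R S K F dir κ')
    (hF : ∀ u ∈ us, vnorm u ≤ N ∧ u ∈ F) (hcompliant : Compliant c (nested S K dir κ') us) :
    (phases (PhaseEnds S K dir) us).1.sum ⬝ᵥ (phases (PhaseEnds S K dir) us).1.sum ≤
      d * ((S + N : ℕ) * (S + N : ℕ)) := by
  refine phases_fst_induction (PhaseEnds S K dir) us (P := fun pre => pre.sum ⬝ᵥ pre.sum ≤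
    d * ((S + N : ℕ) * (S + N : ℕ))) ?_ ?_
  · rw [List.sum_nil, dotProduct_zero]
    positivity
  intro pre mid u hus hphases hends ih
  have hprefix (m) (hm : m <+: mid) : phases (PhaseEnds S K dir) (pre ++ m) = (pre, m) := by
    simpa only [hphases] using phases_of_prefix (PhaseEnds S K dir) (us := pre ++ mid) (m := m)
      (by rwa [hphases])
  have hnot_ends : mid ≠ [] → ¬ PhaseEnds S K dir pre mid := by
    simpa only [hphases] using not_ends_phases (PhaseEnds S K dir) (us := pre ++ mid)
  have hN : ∀ v ∈ mid ++ [u], vnorm v ≤ N := fun v hv =>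
    (hF v (hus.subset (List.mem_append_right _ hv))).1
  rw [List.sum_append]
  by_cases hnear : vnorm pre.sum < S
  · obtain rfl : mid = [] := by_contra fun hne => hnot_ends hne (Or.inl hnear)
    have hle : vnorm (pre.sum + ([] ++ [u]).sum) ≤ S + N := (vnorm_add_le _ _).trans
      (add_le_add hnear.le (by simpa using hN u))
    exact (le_abs_self _).trans (abs_dotProduct_le (vnorm_le_iff.1 hle) (vnorm_le_iff.1 hle))
  · have hK : 0 < K := (Nat.pos_of_mul_pos_left spec.pos).trans_le spec.N_le
    have hneg : mid.countP (dir pre.sum ⬝ᵥ · < 0) < K := by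
      rcases eq_or_ne mid [] with rfl | hne
      · exact hK
      · exact not_le.1 fun hle => hnot_ends hne (Or.inr hle)
    obtain ⟨hnorm, hpos⟩ := spec.block_bound hF hcompliant hus
      (fun m hm hlen => hprefix m (prefix_of_prefix_concat hm hlen)) (not_lt.1 hnear) (by
        rw [List.countP_append]
        have := List.countP_le_length (p := (dir pre.sum ⬝ᵥ · < 0)) (l := [u])
        rw [List.length_singleton] at this
        omega)
    exact (spec.dotProduct_self_le_of_phaseEnds (not_lt.1 hnear) hN hnorm hpos
      (hends.resolve_left hnear)).trans ih

theorem confines_nested (spec : NestedSpec c N H R S K F dir κ') :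
    Confines c N F (nested S K dir κ') (d * (S + N) + 3 * N * K) := by
  intro us hF hcompliant
  set pre := (phases (PhaseEnds S K dir) us).1 with hpre
  set mid := (phases (PhaseEnds S K dir) us).2
  have happend : pre ++ mid = us := phases_append _ us
  have hpre_le : vnorm pre.sum ≤ d * (S + N) := by
    have hsq := (sq_vnorm_le_dotProduct_self _).trans (spec.dotProduct_self_phases_le hF hcompliant)
    rw [← hpre] at hsq
    refine (Nat.pow_le_pow_iff_left two_ne_zero).1 ?_
    calc vnorm pre.sum ^ 2 ≤ d * ((S + N) * (S + N)) := by exact_mod_cast hsq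
      _ ≤ d ^ 2 * ((S + N) * (S + N)) := by
        gcongr
        exact Nat.le_self_pow two_ne_zero d
      _ = (d * (S + N)) ^ 2 := by ring
  have hmid_le : vnorm mid.sum ≤ 3 * N * K := by
    rcases eq_or_ne mid [] with hnil | hne
    · simp [hnil]
    have hnot_ends := not_ends_phases (PhaseEnds S K dir) hne
    rw [PhaseEnds, not_or, not_lt, not_le] at hnot_ends
    exact (spec.block_bound hF hcompliant (by rw [happend])
      (fun m hm _ => phases_of_prefix _ hm) hnot_ends.1 hnot_ends.2.le).1
  calc vnorm us.sum = vnorm (pre.sum + mid.sum) := by rw [← List.sum_append, happend]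
    _ ≤ d * (S + N) + 3 * N * K := (vnorm_add_le _ _).trans (add_le_add hpre_le hmid_le)

end NestedSpec

end Nested

theorem finrank_inf_ker_lt {R M : Type*} [CommRing R] [IsDomain R] [AddCommGroup M] [Module R M]
    {F : Submodule R M} [Module.Finite R F] {f : M →ₗ[R] R} {x : M} (hx : x ∈ F) (hfx : f x ≠ 0) :
    Module.finrank R ↥(F ⊓ LinearMap.ker f) < Module.finrank R F := by
  let g := f ∘ₗ F.subtype
  have hker : Module.finrank R (LinearMap.ker g) = Module.finrank R ↥(F ⊓ LinearMap.ker f) := by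
    rw [← Submodule.map_comap_subtype, Submodule.finrank_map_subtype_eq, LinearMap.ker_comp]
  have hrange : 1 ≤ Module.finrank R (LinearMap.range g) := by
    rw [Submodule.one_le_finrank_iff, ne_eq, LinearMap.range_eq_bot]
    exact fun hg => hfx (LinearMap.congr_fun hg ⟨x, hx⟩)
  have hrank := (LinearMap.ker g).finrank_quotient_add_finrank
  rw [g.quotKerEquivRange.finrank_eq, hker] at hrank
  omega

theorem nested_bound_le {N H R K X : ℕ} (hd : 1 ≤ d) (hN : 1 ≤ N) (hH : 1 ≤ H)
    (hK : K = R + 4 * (N * (d * (H * N)))) (hX : X = 144 * (H * (d ^ 2 * N ^ 2))) :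
    d * (9 * d * H * N ^ 2 * K + N) + 3 * N * K ≤ X * (R + X) := by
  have hKpos : 1 ≤ K := by
    have : 0 < 4 * (N * (d * (H * N))) := by positivity
    omega
  have hd2 : d ≤ d ^ 2 := Nat.le_self_pow two_ne_zero d
  have hN2 : N ≤ N ^ 2 := Nat.le_self_pow two_ne_zero N
  have hKX : K ≤ R + X := by
    have : N * (d * (H * N)) ≤ H * (d ^ 2 * N ^ 2) := by
      calc N * (d * (H * N)) = H * (d * N ^ 2) := by ring
        _ ≤ H * (d ^ 2 * N ^ 2) := by gcongr
    omega
  have hdN : d * N ≤ H * (d ^ 2 * N ^ 2) * K := by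
    calc d * N = 1 * (d * N) * 1 := by ring
      _ ≤ H * (d ^ 2 * N ^ 2) * K := by gcongr
  have hNK : N * K ≤ H * (d ^ 2 * N ^ 2) * K := by
    calc N * K = 1 * (1 * N) * K := by ring
      _ ≤ H * (d ^ 2 * N ^ 2) * K := by
        gcongr
        exact hd.trans hd2
  calc d * (9 * d * H * N ^ 2 * K + N) + 3 * N * K
      = 9 * (H * (d ^ 2 * N ^ 2) * K) + d * N + 3 * (N * K) := by ring
    _ ≤ 144 * (H * (d ^ 2 * N ^ 2) * K) := by omega
    _ = X * K := by rw [hX]; ring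
    _ ≤ X * (R + X) := Nat.mul_le_mul_left _ hKX

theorem exists_nestedSpec {c N H R K n : ℕ} (hd : 1 ≤ d) (hN : 1 ≤ N) (hc : c ≤ N)
    (hH : H = (12 * d * N) ^ d) (hK : K = R + 4 * (N * (d * (H * N))))
    {F : Submodule ℤ (Fin d → ℤ)} (hF : Module.finrank ℤ F ≤ n + 1)
    (hconfines : ∀ F' : Submodule ℤ (Fin d → ℤ), Module.finrank ℤ F' ≤ n →
      ∃ κ, Confines c N F' κ R) :
    ∃ dir κ', NestedSpec c N H R (9 * d * H * N ^ 2 * K) K F dir κ' := by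
  have hM : 0 < 12 * d * N := by positivity
  have hH1 : 1 ≤ H := hH ▸ Nat.one_le_pow _ _ hM
  have hNK : N ≤ K := by
    have : N * 1 ≤ N * (d * (H * N)) := Nat.mul_le_mul_left N (Nat.mul_pos hd (Nat.mul_pos hH1 hN))
    omega
  have hS : 0 < 9 * d * H * N ^ 2 * K := by
    have : 0 < K := by omega
    positivity
  choose! q dir happrox using fun a (ha : 9 * d * H * N ^ 2 * K ≤ vnorm a) =>
    exists_approxDirection hM (hS.trans_le ha)
  choose! κ' hκ' using fun a (haF : a ∈ F) (ha : 9 * d * H * N ^ 2 * K ≤ vnorm a) =>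
    hconfines (F ⊓ LinearMap.ker (dotProductEquiv ℤ (Fin d) (dir a))) (by
      have hdir : dir a ⬝ᵥ a ≠ 0 :=
        (happrox a ha).dotProduct_ne_zero (by nlinarith) (hS.trans_le ha)
      have := finrank_inf_ker_lt (f := dotProductEquiv ℤ (Fin d) (dir a)) haF hdir
      omega)
  exact ⟨dir, κ',
    { pos := hM, c_le := hc, N_le := hNK, R_le := by omega, le_K := by omega, le_S := le_rfl
      approx := fun a ha => ⟨q a, hH ▸ happrox a ha⟩
      confines := hκ' }⟩

theorem exists_confines {c N : ℕ} (hd : 1 ≤ d) (hN : 1 ≤ N) (hc : c ≤ N) {n : ℕ}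
    {F : Submodule ℤ (Fin d → ℤ)} (hF : Module.finrank ℤ F ≤ n) :
    ∃ κ, Confines c N F κ (((12 * d * N) ^ (d + 2)) ^ (2 * n + 1)) := by
  induction n generalizing F with
  | zero =>
    refine ⟨fun _ => [], fun us hus _ => ?_⟩
    have hmem : us.sum ∈ F := list_sum_mem fun u hu => (hus u hu).2
    rw [Submodule.finrank_eq_zero.1 (Nat.le_zero.1 hF), Submodule.mem_bot] at hmem
    rw [hmem, vnorm_zero]
    exact Nat.zero_le _
  | succ n ih =>
    set X := (12 * d * N) ^ (d + 2) with hX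
    obtain ⟨H, hH⟩ : ∃ H, H = (12 * d * N) ^ d := ⟨_, rfl⟩
    obtain ⟨K, hK⟩ : ∃ K, K = X ^ (2 * n + 1) + 4 * (N * (d * (H * N))) := ⟨_, rfl⟩
    have hH1 : 1 ≤ H := hH ▸ Nat.one_le_pow _ _ (by positivity)
    have hXH : X = 144 * (H * (d ^ 2 * N ^ 2)) := by rw [hX, hH]; ring
    have hX2 : 2 ≤ X := by
      have : 0 < H * (d ^ 2 * N ^ 2) := by positivity
      omega
    obtain ⟨dir, κ', spec⟩ := exists_nestedSpec hd hN hc hH hK hF fun _ => ih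
    refine ⟨_, fun us hus hcompliant => (spec.confines_nested us hus hcompliant).trans ?_⟩
    calc d * (9 * d * H * N ^ 2 * K + N) + 3 * N * K
        ≤ X * (X ^ (2 * n + 1) + X) := nested_bound_le hd hN hH1 hK hXH
      _ ≤ X * (X ^ (2 * n + 1) + X ^ (2 * n + 1)) := by
        gcongr
        exact Nat.le_self_pow (by omega) X
      _ ≤ X * (X * X ^ (2 * n + 1)) := by
        rw [← two_mul]
        gcongr
      _ = X ^ (2 * (n + 1) + 1) := by ring

theorem pow_add_le_hypercube {N : ℕ} (hd : 1 ≤ d) (hN : 1 ≤ N) :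
    ((12 * d * N) ^ (d + 2)) ^ (2 * d + 1) + N ≤ (4 * N) ^ (2 * (d + 2) ^ 3) := by
  have hbase : 12 * d * N ≤ (4 * N) ^ (d + 2) := by
    calc 12 * d * N ≤ 16 * 4 ^ d * N := by
          have := (Nat.lt_pow_self (n := d) (by norm_num : 1 < 4)).le
          gcongr
          omega
      _ ≤ 16 * 4 ^ d * N ^ (d + 2) := by
          gcongr
          exact Nat.le_self_pow (by omega) N
      _ = (4 * N) ^ (d + 2) := by rw [mul_pow, pow_add 4]; ring
  have hexp : (d + 2) * (d + 2) * (2 * d + 1) + 1 ≤ 2 * (d + 2) ^ 3 := by nlinarith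
  have hN4 : N ≤ (4 * N) ^ ((d + 2) * (d + 2) * (2 * d + 1)) :=
    (Nat.le_mul_of_pos_left N four_pos).trans (Nat.le_self_pow (by positivity) _)
  calc ((12 * d * N) ^ (d + 2)) ^ (2 * d + 1) + N
      ≤ (((4 * N) ^ (d + 2)) ^ (d + 2)) ^ (2 * d + 1) + N := by gcongr
    _ = (4 * N) ^ ((d + 2) * (d + 2) * (2 * d + 1)) + N := by rw [← pow_mul, ← pow_mul, mul_assoc]
    _ ≤ (4 * N) ^ ((d + 2) * (d + 2) * (2 * d + 1)) * (4 * N) := by nlinarith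
    _ = (4 * N) ^ ((d + 2) * (d + 2) * (2 * d + 1) + 1) := (pow_succ _ _).symm
    _ ≤ (4 * N) ^ (2 * (d + 2) ^ 3) := Nat.pow_le_pow_right (by omega) hexp

/-! ### Cutting cycles out of sequences of moves -/

/-- A recorded move: the vertex it leaves, the directions under scrutiny when it is made, and its
weight. -/
structure Entry (α : Type*) (d : ℕ) where
  vertex : α
  label : List (Fin d → ℤ)
  weight : Fin d → ℤ

section Cycles

variable {α : Type*}

/-- The total weight of a list of recorded moves. -/
def totalWeight (l : List (Entry α d)) : Fin d → ℤ := (l.map Entry.weight).sum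

@[simp]
theorem totalWeight_nil : totalWeight ([] : List (Entry α d)) = 0 := rfl

@[simp]
theorem totalWeight_cons (x : Entry α d) (l : List (Entry α d)) :
    totalWeight (x :: l) = x.weight + totalWeight l := by
  simp [totalWeight]

@[simp]
theorem totalWeight_append (l l' : List (Entry α d)) :
    totalWeight (l ++ l') = totalWeight l + totalWeight l' := by
  simp [totalWeight]

theorem vnorm_totalWeight_le {N : ℕ} {l : List (Entry α d)} (hl : ∀ x ∈ l, vnorm x.weight ≤ N) :
    vnorm (totalWeight l) ≤ l.length * N := by
  simpa [totalWeight] using vnorm_list_sum_le (l := l.map Entry.weight) (by simpa using hl)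

variable [DecidableEq α]

/-- The number of moves of `st`, latest first, in the cycle closed by arriving in `v`. -/
def cycleLength (v : α) (st : List (Entry α d)) : ℕ :=
  if v ∈ st.map Entry.vertex then (st.map Entry.vertex).idxOf v + 1 else 0

/-- The cycle closed by arriving in `v` after the moves `st`, latest first; it is empty if `st`
does not visit `v`. -/
def closedCycle (v : α) (st : List (Entry α d)) : List (Entry α d) := st.take (cycleLength v st)

/-- The moves left on `st` once the cycle closed by arriving in `v` is cut out. -/
def cutCycle (v : α) (st : List (Entry α d)) : List (Entry α d) := st.drop (cycleLength v st)

theorem closedCycle_append_cutCycle (v : α) (st : List (Entry α d)) :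
    closedCycle v st ++ cutCycle v st = st :=
  List.take_append_drop _ _

theorem closedCycle_cases (v : α) (st : List (Entry α d)) :
    closedCycle v st = [] ∧ v ∉ st.map Entry.vertex ∨
      ∃ i x, closedCycle v st = i ++ [x] ∧ x.vertex = v := by
  unfold closedCycle cycleLength
  split_ifs with hv
  · have hlt := List.idxOf_lt_length_of_mem hv
    refine .inr ⟨_, st[(st.map Entry.vertex).idxOf v]'(by simpa using hlt),
      (List.take_concat_get' _ _ _).symm, ?_⟩
    exact (List.getElem_map Entry.vertex).symm.trans (List.getElem_idxOf hlt)
  · exact .inl ⟨rfl, hv⟩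

theorem nodup_cons_cutCycle (v : α) {st : List (Entry α d)}
    (hnodup : (st.map Entry.vertex).Nodup) : (v :: (cutCycle v st).map Entry.vertex).Nodup := by
  have happend := closedCycle_append_cutCycle v st
  rcases closedCycle_cases v st with ⟨hnil, hv⟩ | ⟨i, x, hcycle, rfl⟩
  · rw [hnil, List.nil_append] at happend
    rw [happend]
    exact List.nodup_cons.2 ⟨hv, hnodup⟩
  · rw [hcycle] at happend
    rw [← happend, List.append_assoc, List.map_append] at hnodup
    exact hnodup.of_append_right

variable (e : ℕ → Entry α d)

/-- The moves of `e` before instant `n` that do not belong to a cycle already cut out, latest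
first. -/
def stack : ℕ → List (Entry α d)
  | 0 => []
  | n + 1 => cutCycle (e (n + 1)).vertex (e n :: stack n)

/-- The cycle closed by the `n`-th move of `e`, empty if there is none. -/
def cycle (n : ℕ) : List (Entry α d) := closedCycle (e (n + 1)).vertex (e n :: stack e n)

/-- The weights of the cycles closed by the first `n` moves of `e`. -/
def cycleWeights (n : ℕ) : List (Fin d → ℤ) :=
  (List.range n).map fun j => totalWeight (cycle e j)

theorem cycleWeights_succ (n : ℕ) :
    cycleWeights e (n + 1) = cycleWeights e n ++ [totalWeight (cycle e n)] := by
  simp [cycleWeights, List.range_succ]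

theorem cycle_append_stack_succ (n : ℕ) : cycle e n ++ stack e (n + 1) = e n :: stack e n :=
  closedCycle_append_cutCycle _ _

theorem stack_succ_suffix (n : ℕ) : stack e (n + 1) <:+ e n :: stack e n :=
  ⟨_, cycle_append_stack_succ e n⟩

theorem mem_cycle_self {n : ℕ} (hne : cycle e n ≠ []) : e n ∈ cycle e n := by
  obtain ⟨x, l, hcycle⟩ := List.exists_cons_of_ne_nil hne
  have happend := cycle_append_stack_succ e n
  rw [hcycle, List.cons_append, List.cons.injEq] at happend
  rw [hcycle, happend.1]
  exact List.mem_cons_self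

theorem sum_weight_eq (n : ℕ) :
    ∑ j ∈ Finset.range n, (e j).weight = (cycleWeights e n).sum + totalWeight (stack e n) := by
  induction n with
  | zero => simp [cycleWeights, stack]
  | succ n ih =>
    have happend := congrArg totalWeight (cycle_append_stack_succ e n)
    rw [totalWeight_append, totalWeight_cons] at happend
    rw [Finset.sum_range_succ, ih, cycleWeights_succ, List.sum_append, List.sum_singleton,
      add_assoc, add_assoc, happend, add_comm (totalWeight _)]

theorem nodup_vertex_stack (n : ℕ) : ((e n :: stack e n).map Entry.vertex).Nodup := by
  induction n with
  | zero => simp [stack]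
  | succ n ih => exact nodup_cons_cutCycle _ ih

theorem exists_eq_of_suffix_stack {n : ℕ} {x : Entry α d} {s : List (Entry α d)}
    (hsuffix : x :: s <:+ e n :: stack e n) : ∃ j ≤ n, e j = x ∧ stack e j = s := by
  induction n with
  | zero =>
    rcases List.suffix_cons_iff.1 hsuffix with heq | hsuffix
    · exact ⟨0, le_rfl, by simp_all⟩
    · simp [stack] at hsuffix
  | succ n ih =>
    rcases List.suffix_cons_iff.1 hsuffix with heq | hsuffix
    · exact ⟨n + 1, le_rfl, by simp_all⟩
    · obtain ⟨j, hj, h⟩ := ih (hsuffix.trans (stack_succ_suffix e n))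
      exact ⟨j, hj.trans n.le_succ, h⟩

theorem cycle_eq_nil_or_exists_last (n : ℕ) :
    cycle e n = [] ∨ ∃ j ≤ n, e j ∈ cycle e n ∧ e j :: stack e (n + 1) <:+ e n :: stack e n ∧
      stack e j = stack e (n + 1) ∧ (e j).vertex = (e (n + 1)).vertex := by
  refine (closedCycle_cases (e (n + 1)).vertex (e n :: stack e n)).imp And.left ?_
  rintro ⟨i, x, hcycle, hx⟩
  have hsuffix : x :: stack e (n + 1) <:+ e n :: stack e n := by
    refine ⟨i, ?_⟩
    rw [← cycle_append_stack_succ, cycle, hcycle, List.append_assoc, List.singleton_append]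
  obtain ⟨j, hj, rfl, hstack⟩ := exists_eq_of_suffix_stack e hsuffix
  exact ⟨j, hj, by simp [cycle, hcycle], hsuffix, hstack, hx⟩

variable [Fintype α]

theorem length_cons_stack_le (n : ℕ) : (e n :: stack e n).length ≤ Fintype.card α := by
  simpa using (nodup_vertex_stack e n).length_le_card

variable {e} in
theorem vnorm_totalWeight_le_of_infix {N n : ℕ} {l : List (Entry α d)}
    (hN : ∀ j, vnorm (e j).weight ≤ N) (hl : l <:+: e n :: stack e n) :
    vnorm (totalWeight l) ≤ Fintype.card α * N := by
  refine (vnorm_totalWeight_le fun x hx => ?_).trans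
    (Nat.mul_le_mul_right N (hl.length_le.trans (length_cons_stack_le e n)))
  obtain ⟨t, s, hts⟩ := List.append_of_mem (hl.subset hx)
  obtain ⟨j, -, rfl, -⟩ := exists_eq_of_suffix_stack e ⟨t, hts.symm⟩
  exact hN j

end Cycles

/-- The cycle `l` escapes if its total weight is lexicographically positive along directions
scrutinised throughout `l`. -/
def Escaping {α : Type*} (l : List (Entry α d)) : Prop :=
  ∃ p h, (∀ x ∈ l, p ++ [h] <+: x.label) ∧ LexPos p h (totalWeight l)

theorem not_escaping_nil {α : Type*} : ¬ Escaping ([] : List (Entry α d)) := by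
  rintro ⟨p, h, -, -, hpos⟩
  simp at hpos

/-! ### Without escaping cycles, the controller is obeyed -/

section Compliance

variable {α : Type*} [DecidableEq α] {e : ℕ → Entry α d}

theorem exists_eq_cycleWeights_of_prefix {n : ℕ} {us : List (Fin d → ℤ)}
    (hus : us <+: cycleWeights e n) : ∃ k, us = cycleWeights e k := by
  rw [List.prefix_iff_eq_take, cycleWeights, ← List.map_take, List.take_range] at hus
  exact ⟨_, hus⟩

-- `new` holds the moves made since the directions `p ++ [h]` are demanded. A cycle made of such
-- moves only is not positive along `p ++ [h]`, so a positive one removes a move from `old`.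
theorem exists_split_stack_succ {n : ℕ} {p : List (Fin d → ℤ)} {h : Fin d → ℤ}
    {new old : List (Entry α d)} (hesc : ¬ Escaping (cycle e n))
    (hstack : stack e n = new ++ old) (hnew : ∀ x ∈ e n :: new, p ++ [h] <+: x.label) :
    ∃ new' old', stack e (n + 1) = new' ++ old' ∧ (∀ x ∈ new', p ++ [h] <+: x.label) ∧
      old'.length + (if LexPos p h (totalWeight (cycle e n)) then 1 else 0) ≤ old.length := by
  have happend := cycle_append_stack_succ e n
  have hnonpos (hsub : cycle e n ⊆ e n :: new) : ¬ LexPos p h (totalWeight (cycle e n)) :=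
    fun hpos => hesc ⟨p, h, fun x hx => hnew x (hsub hx), hpos⟩
  rw [hstack, ← List.cons_append, List.append_eq_append_iff] at happend
  rcases happend with ⟨kept, hsplit, hstack'⟩ | ⟨popped, hcycle, rfl⟩
  · refine ⟨kept, old, hstack', fun x hx => hnew x (by simp [hsplit, hx]), ?_⟩
    rw [if_neg (hnonpos (by simp [hsplit]))]
    simp
  · refine ⟨[], stack e (n + 1), rfl, by simp, ?_⟩
    split_ifs with hpos
    · have hpopped : popped ≠ [] := by
        rintro rfl
        exact hnonpos (by simp [hcycle]) hpos
      have := List.length_pos_iff.2 hpopped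
      rw [List.length_append]
      omega
    · simp

theorem compliant_cycleWeights [Fintype α] {κ : Controller d}
    (hlabel : ∀ n, (e n).label = κ (cycleWeights e n)) (hesc : ∀ n, ¬ Escaping (cycle e n))
    (n : ℕ) : Compliant (Fintype.card α) κ (cycleWeights e n) := by
  intro pre mid hprefix p h hdemand
  obtain ⟨k, hk⟩ := exists_eq_cycleWeights_of_prefix hprefix
  suffices ∃ new old, stack e k = new ++ old ∧ (∀ x ∈ new, p ++ [h] <+: x.label) ∧
      old.length + mid.countP (LexPos p h ·) ≤ Fintype.card α by
    obtain ⟨_, _, _, _, hcount⟩ := this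
    omega
  clear hprefix
  induction mid using List.reverseRecOn generalizing k with
  | nil =>
    have hlen := length_cons_stack_le e k
    exact ⟨[], stack e k, rfl, by simp, by simp only [List.length_cons] at hlen; simp; omega⟩
  | append_singleton mid u ih =>
    cases k with
    | zero => simp [cycleWeights] at hk
    | succ k =>
      rw [cycleWeights_succ, ← List.append_assoc] at hk
      obtain ⟨hpre, hu⟩ := List.append_inj' hk rfl
      obtain rfl : u = totalWeight (cycle e k) := by simpa using hu
      obtain ⟨new, old, hstack, hnew, hcount⟩ := ih
        (fun m hm hlen => hdemand m (hm.trans (List.prefix_append _ _)) (by simp; omega)) k hpre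
      have hcurrent : p ++ [h] <+: (e k).label := by
        rw [hlabel, ← hpre]
        exact hdemand mid (List.prefix_append _ _) (by simp)
      obtain ⟨new', old', hstack', hnew', hlen⟩ :=
        exists_split_stack_succ (hesc k) hstack (List.forall_mem_cons.2 ⟨hcurrent, hnew⟩)
      refine ⟨new', old', hstack', hnew', ?_⟩
      simp only [List.countP_append, List.countP_singleton, decide_eq_true_eq]
      omega

end Compliance

/-! ### Escaping cycles make the weight unbounded -/

theorem Escaping.exists_extension {α : Type*} {l : List (Entry α d)} {q : List (Fin d → ℤ)}
    (hl : Escaping l) (hne : l ≠ []) (hq : ∀ x ∈ l, q <+: x.label)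
    (horth : ∀ g ∈ q, g ⬝ᵥ totalWeight l = 0) :
    ∃ h, (∀ x ∈ l, q ++ [h] <+: x.label) ∧ 0 ≤ h ⬝ᵥ totalWeight l := by
  obtain ⟨p, h, hp, hzero, hpos⟩ := hl
  obtain ⟨y, hy⟩ := List.exists_mem_of_ne_nil l hne
  have hqp : q <+: p := by
    rcases List.prefix_or_prefix_of_prefix (hp y hy) (hq y hy) with hpq | hqp
    · exact absurd (horth h (hpq.subset (by simp))) hpos.ne'
    · refine (List.prefix_concat_iff.1 hqp).resolve_left ?_
      rintro rfl
      exact hpos.ne' (horth h (by simp))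
  obtain ⟨t, rfl⟩ := hqp
  cases t with
  | nil => exact ⟨h, by simpa using hp, hpos.le⟩
  | cons g t =>
    refine ⟨g, fun x hx => ?_, (hzero g (by simp)).ge⟩
    exact List.IsPrefix.trans ⟨t ++ [h], by simp⟩ (hp x hx)

theorem eventually_eq_zero_of_bounded_sum {f : ℕ → ℤ} {B : ℤ} (hf : ∀ᶠ n in atTop, 0 ≤ f n)
    (hB : ∀ n, |∑ j ∈ Finset.range n, f j| ≤ B) : ∀ᶠ n in atTop, f n = 0 := by
  obtain ⟨T, hT⟩ := eventually_atTop.1 hf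
  have hnonneg (n : ℕ) : 0 ≤ f (T + n) := hT _ (T.le_add_right n)
  have hsum (n : ℕ) : ∑ j ∈ Finset.range n, (f (T + j) : ℝ) ≤ B + B := by
    have hsplit := Finset.sum_range_add f T n
    have hlow := neg_le_of_abs_le (hB T)
    have hhigh := le_of_abs_le (hB (T + n))
    exact_mod_cast (by linarith : ∑ j ∈ Finset.range n, f (T + j) ≤ B + B)
  have hlim := (summable_of_sum_range_le (fun n => by exact_mod_cast hnonneg n)
    hsum).tendsto_atTop_zero
  obtain ⟨T', hT'⟩ := eventually_atTop.1 (hlim.eventually_lt_const one_pos)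
  refine eventually_atTop.2 ⟨T + T', fun n hn => ?_⟩
  obtain ⟨k, rfl⟩ := Nat.exists_eq_add_of_le (le_of_add_le_left hn)
  have hlt : f (T + k) < 1 := by exact_mod_cast hT' k (by omega)
  exact (Int.lt_add_one_iff.1 hlt).antisymm (hnonneg k)

theorem exists_frequently_eq_eventually_le {f : ℕ → ℕ} {C : ℕ} (hC : ∀ n, f n ≤ C) :
    ∃ m, (∃ᶠ n in atTop, f n = m) ∧ ∀ᶠ n in atTop, m ≤ f n := by
  classical
  have hex : ∃ m, ∃ᶠ n in atTop, f n ≤ m := ⟨C, Frequently.of_forall hC⟩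
  have hlt : ∀ᶠ n in atTop, ∀ m ∈ Finset.range (Nat.find hex), m < f n := by
    refine (eventually_all_finset _).2 fun m hm => ?_
    simpa using Nat.find_min hex (Finset.mem_range.1 hm)
  have hle : ∀ᶠ n in atTop, Nat.find hex ≤ f n := hlt.mono fun n hn =>
    not_lt.1 fun h => lt_irrefl _ (hn _ (Finset.mem_range.2 h))
  exact ⟨_, ((Nat.find_spec hex).and_eventually hle).mono fun n hn => hn.1.antisymm hn.2, hle⟩

section Unbounded

variable {α : Type*} [DecidableEq α] {e : ℕ → Entry α d}

theorem suffix_stack_of_length_lt {n k : ℕ} (hnk : n ≤ k)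
    (hlt : ∀ j, n < j → j ≤ k → (stack e n).length < (stack e j).length) :
    e n :: stack e n <:+ e k :: stack e k := by
  induction k, hnk using Nat.le_induction with
  | base => exact List.suffix_rfl
  | succ k hnk ih =>
    have hsuffix := ih fun j hnj hjk => hlt j hnj (hjk.trans k.le_succ)
    exact (List.suffix_of_suffix_length_le hsuffix (stack_succ_suffix e k)
      (hlt (k + 1) (by omega) le_rfl)).trans (List.suffix_cons _ _)

theorem mem_cycle_of_length_le {n k : ℕ} (hsuffix : e n :: stack e n <:+ e k :: stack e k)
    (hle : (stack e (k + 1)).length ≤ (stack e n).length) : e n ∈ cycle e k := by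
  obtain ⟨t, ht⟩ := hsuffix
  rw [← cycle_append_stack_succ e k, List.append_eq_append_iff] at ht
  rcases ht with ⟨a, hcycle, ha⟩ | ⟨a, -, ha⟩
  · cases a with
    | nil =>
      have := congrArg List.length ha
      simp only [List.length_cons, List.nil_append] at this
      omega
    | cons x a =>
      rw [List.cons_append, List.cons.injEq] at ha
      simp [hcycle, ha.1]
  · have := congrArg List.length ha
    simp only [List.length_append, List.length_cons] at this
    omega

variable {ℓ : List (Entry α d) → α → List (Fin d → ℤ)} {β : Type*} {f : List (Fin d → ℤ) → β}

theorem label_eq_of_first_return (hℓ : ∀ n, (e n).label = ℓ (stack e n) (e n).vertex) {n k : ℕ}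
    (hsuffix : e n :: stack e n <:+ e k :: stack e k)
    (hle : (stack e (k + 1)).length ≤ (stack e n).length)
    (hf : (stack e (k + 1)).length < (stack e n).length →
      ∀ x ∈ cycle e k, ∀ y ∈ cycle e k, f x.label = f y.label) :
    f (e n).label = f (e (k + 1)).label := by
  have hmem := mem_cycle_of_length_le hsuffix hle
  obtain ⟨j, -, hj, hjsuffix, hstack, hvertex⟩ :=
    (cycle_eq_nil_or_exists_last e k).resolve_left (List.ne_nil_of_mem hmem)
  have hlabel : (e (k + 1)).label = (e j).label := by rw [hℓ, hℓ j, hstack, hvertex]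
  rw [hlabel]
  rcases hle.lt_or_eq with hlt | heq
  · exact hf hlt _ hmem _ hj
  · have hsame := (List.suffix_of_suffix_length_le hjsuffix hsuffix (by simp [heq])).eq_of_length
      (by simp [heq])
    rw [(List.cons.inj hsame).1]

theorem label_eq_of_length_stack_le (hℓ : ∀ n, (e n).label = ℓ (stack e n) (e n).vertex)
    {n N : ℕ} (hnN : n ≤ N)
    (hmin : ∀ k, n ≤ k → (stack e N).length ≤ (stack e k).length)
    (hf : ∀ k, n ≤ k → (stack e (k + 1)).length < (stack e n).length →
      ∀ x ∈ cycle e k, ∀ y ∈ cycle e k, f x.label = f y.label) :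
    f (e n).label = f (e N).label := by
  induction hr : N - n using Nat.strong_induction_on generalizing n with
  | _ r ih =>
    rcases hnN.eq_or_lt with rfl | hlt
    · rfl
    have hex : ∃ k, n < k ∧ (stack e k).length ≤ (stack e n).length := ⟨N, hlt, hmin n le_rfl⟩
    obtain ⟨k, hk⟩ : ∃ k, Nat.find hex = k + 1 :=
      Nat.exists_eq_succ_of_ne_zero (Nat.ne_zero_of_lt (Nat.find_spec hex).1)
    have hfirst (j : ℕ) (hnj : n < j) (hjk : j ≤ k) :
        (stack e n).length < (stack e j).length := by
      simpa [hnj] using Nat.find_min hex (m := j) (by omega)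
    obtain ⟨hnk, hle⟩ := hk ▸ Nat.find_spec hex
    have hkN : k + 1 ≤ N := hk ▸ Nat.find_min' hex ⟨hlt, hmin n le_rfl⟩
    rw [label_eq_of_first_return hℓ (suffix_stack_of_length_lt (by omega) hfirst) hle
      (hf k (by omega))]
    exact ih (N - (k + 1)) (by omega) hkN (fun j hj => hmin j (by omega))
      (fun j hj hlt' => hf j (by omega) (hlt'.trans_le hle)) rfl

/-- The label `L` is persistent in `e` if, whenever the labels inside each closed cycle eventually
agree on their first `k` directions, these are eventually the first `k` directions of `L`. -/
def PersistentLabel (e : ℕ → Entry α d) (L : List (Fin d → ℤ)) : Prop :=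
  ∀ k : ℕ, (∀ᶠ n in atTop, ∀ x ∈ cycle e n, ∀ y ∈ cycle e n, x.label.take k = y.label.take k) →
    ∀ᶠ n in atTop, ∀ x ∈ cycle e n, x.label.take k = L.take k

variable [Finite α]

-- The label is that of the move made at the lowest height to which the stack keeps returning.
theorem exists_persistentLabel (hℓ : ∀ n, (e n).label = ℓ (stack e n) (e n).vertex) :
    ∃ L, PersistentLabel e L := by
  cases nonempty_fintype α
  have hbounded (n : ℕ) : (stack e n).length ≤ Fintype.card α :=
    (Nat.le_succ _).trans (length_cons_stack_le e n)
  obtain ⟨m, hfreq, hge⟩ := exists_frequently_eq_eventually_le hbounded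
  obtain ⟨T, hT⟩ := eventually_atTop.1 hge
  obtain ⟨n₀, hn₀, hm₀⟩ := frequently_atTop.1 hfreq T
  refine ⟨(e n₀).label, fun k hk => ?_⟩
  obtain ⟨T', hT'⟩ := eventually_atTop.1 hk
  refine eventually_atTop.2 ⟨max n₀ T', fun n hn x hx => ?_⟩
  obtain ⟨N, hN, hmN⟩ := frequently_atTop.1 hfreq n
  have hminN (j : ℕ) (hj : n₀ ≤ j) : (stack e N).length ≤ (stack e j).length :=
    hmN ▸ hT j (hn₀.trans hj)
  calc x.label.take k = (e n).label.take k :=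
        hT' n (by omega) _ hx _ (mem_cycle_self e (List.ne_nil_of_mem hx))
    _ = (e N).label.take k :=
        label_eq_of_length_stack_le (f := List.take k) hℓ hN (fun j hj => hminN j (by omega))
          fun j hj _ => hT' j (by omega)
    _ = (e n₀).label.take k := by
        refine (label_eq_of_length_stack_le hℓ (by omega : n₀ ≤ N) hminN fun j hj hlt => ?_).symm
        exact absurd (hT (j + 1) (by omega)) (not_le.2 (hm₀ ▸ hlt))

theorem frequently_cycle_ne_nil (e : ℕ → Entry α d) : ∃ᶠ n in atTop, cycle e n ≠ [] := by
  cases nonempty_fintype α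
  intro hnil
  simp only [not_not] at hnil
  obtain ⟨T, hT⟩ := eventually_atTop.1 hnil
  have hgrow (j : ℕ) : (stack e (T + j)).length = (stack e T).length + j := by
    induction j with
    | zero => rfl
    | succ j ih =>
      have happend := cycle_append_stack_succ e (T + j)
      rw [hT _ (T.le_add_right j), List.nil_append] at happend
      rw [← add_assoc, happend, List.length_cons, ih, add_assoc]
  have hlen := length_cons_stack_le e (T + Fintype.card α)
  rw [List.length_cons, hgrow] at hlen
  omega

/-- From some instant on, the directions `q` begin the labels of all the moves in the closed
cycles, and are orthogonal to the weights of these cycles. -/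
def EventuallyOrthogonal (e : ℕ → Entry α d) (q : List (Fin d → ℤ)) : Prop :=
  ∀ᶠ n in atTop, (∀ x ∈ cycle e n, q <+: x.label) ∧ ∀ g ∈ q, g ⬝ᵥ totalWeight (cycle e n) = 0

theorem EventuallyOrthogonal.exists_concat_nonneg {L q : List (Fin d → ℤ)}
    (hL : PersistentLabel e L) (hesc : ∀ n, cycle e n ≠ [] → Escaping (cycle e n))
    (hq : EventuallyOrthogonal e q) :
    ∃ h, q ++ [h] <+: L ∧ ∀ᶠ n in atTop,
      (∀ x ∈ cycle e n, q ++ [h] <+: x.label) ∧ 0 ≤ h ⬝ᵥ totalWeight (cycle e n) := by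
  have take_eq {h : Fin d → ℤ} {l : List (Fin d → ℤ)} (hl : q ++ [h] <+: l) :
      l.take (q.length + 1) = q ++ [h] := by
    simpa using (List.prefix_iff_eq_take.1 hl).symm
  have hext : ∀ᶠ n in atTop, cycle e n ≠ [] → ∃ h, (∀ x ∈ cycle e n, q ++ [h] <+: x.label) ∧
      0 ≤ h ⬝ᵥ totalWeight (cycle e n) :=
    hq.mono fun n hn hne => (hesc n hne).exists_extension hne hn.1 hn.2
  have hlabel := hL (q.length + 1) <| hext.mono fun n hn x hx y hy => by
    obtain ⟨h, hh, -⟩ := hn (List.ne_nil_of_mem hx)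
    rw [take_eq (hh x hx), take_eq (hh y hy)]
  obtain ⟨n₁, hne₁, hext₁, hlabel₁⟩ :=
    ((frequently_cycle_ne_nil e).and_eventually (hext.and hlabel)).exists
  obtain ⟨h, hh, -⟩ := hext₁ hne₁
  have hmem₁ := mem_cycle_self e hne₁
  have hLtake : L.take (q.length + 1) = q ++ [h] := by
    rw [← hlabel₁ _ hmem₁, take_eq (hh _ hmem₁)]
  refine ⟨h, hLtake ▸ List.take_prefix _ _, ?_⟩
  filter_upwards [hext, hlabel] with n hextn hlabeln
  refine ⟨fun x hx => ?_, ?_⟩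
  · rw [← hLtake, ← hlabeln x hx]
    exact List.take_prefix _ _
  rcases eq_or_ne (cycle e n) [] with hnil | hne
  · simp [hnil]
  · obtain ⟨h', hh', hpos⟩ := hextn hne
    have hmem := mem_cycle_self e hne
    have heq := (take_eq (hh' _ hmem)).symm.trans ((hlabeln _ hmem).trans hLtake)
    obtain rfl : h' = h := by simpa using heq
    exact hpos

theorem EventuallyOrthogonal.exists_concat {L q : List (Fin d → ℤ)} {B : ℕ}
    (hL : PersistentLabel e L) (hesc : ∀ n, cycle e n ≠ [] → Escaping (cycle e n))
    (hB : ∀ n, vnorm (cycleWeights e n).sum ≤ B) (hq : EventuallyOrthogonal e q) :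
    ∃ h, q ++ [h] <+: L ∧ EventuallyOrthogonal e (q ++ [h]) := by
  obtain ⟨h, hqL, hh⟩ := hq.exists_concat_nonneg hL hesc
  have hzero := eventually_eq_zero_of_bounded_sum (B := d * (vnorm h * B))
    (hh.mono fun n hn => hn.2) fun n => by
      rw [← dotProduct_sum]
      exact abs_dotProduct_le (abs_le_vnorm h) (vnorm_le_iff.1 (hB n))
  refine ⟨h, hqL, ?_⟩
  filter_upwards [hq, hh, hzero] with n hqn hhn hzeron
  exact ⟨hhn.1, List.forall_mem_append.2 ⟨hqn.2, by simpa using hzeron⟩⟩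

theorem exists_lt_vnorm_sum_cycleWeights
    (hℓ : ∀ n, (e n).label = ℓ (stack e n) (e n).vertex)
    (hesc : ∀ n, cycle e n ≠ [] → Escaping (cycle e n)) (B : ℕ) :
    ∃ n, B < vnorm (cycleWeights e n).sum := by
  by_contra! hB
  obtain ⟨L, hL⟩ := exists_persistentLabel hℓ
  have hlong (k : ℕ) : ∃ q, q.length = k ∧ q <+: L ∧ EventuallyOrthogonal e q := by
    induction k with
    | zero => exact ⟨[], rfl, List.nil_prefix, by simp [EventuallyOrthogonal]⟩
    | succ k ih =>
      obtain ⟨q, rfl, -, hq⟩ := ih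
      obtain ⟨h, hh, hqh⟩ := hq.exists_concat hL hesc hB
      exact ⟨q ++ [h], by simp, hh, hqh⟩
  obtain ⟨q, hlen, hqL, -⟩ := hlong (L.length + 1)
  have := hqL.length_le
  omega

end Unbounded

/-! ### Remembering the stack along a play -/

section Memory

variable {U : Type}

theorem hist_succ (ρ : ℕ → Conf U d) (n : ℕ) : hist ρ (n + 1) = hist ρ n ++ [ρ n] := by
  simp [hist, List.range_succ]

/-- What a player remembers of a play: the moves outside the cycles cut out so far, latest first,
and the weights of these cycles, earliest first. -/
structure Memory (α : Type*) (d : ℕ) where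
  stack : List (Entry α d)
  cycleWeights : List (Fin d → ℤ)

/-- A labelling chooses the label of the next move from the memory and the current vertex. -/
abbrev Labelling (α : Type*) (d : ℕ) := Memory α d → α → List (Fin d → ℤ)

variable [DecidableEq U] (Λ : Labelling U d)

/-- The memory after the step from the configuration `c` to the configuration `c'`. -/
def Memory.update (m : Memory U d) (c c' : Conf U d) : Memory U d :=
  let st := ⟨c.1, Λ m c.1, c'.2 - c.2⟩ :: m.stack
  ⟨cutCycle c'.1 st, m.cycleWeights ++ [totalWeight (closedCycle c'.1 st)]⟩

/-- The memory after a path, given with its latest configuration first. -/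
def memory : List (Conf U d) → Memory U d
  | c' :: c :: past => (memory (c :: past)).update Λ c c'
  | _ => ⟨[], []⟩

/-- The memory at instant `n` of the play `ρ`. -/
def memoryAt (ρ : ℕ → Conf U d) (n : ℕ) : Memory U d := memory Λ (ρ n :: (hist ρ n).reverse)

/-- The `n`-th move of the play `ρ`, with the label chosen by `Λ`. -/
def entry (ρ : ℕ → Conf U d) (n : ℕ) : Entry U d :=
  ⟨(ρ n).1, Λ (memoryAt Λ ρ n) (ρ n).1, (ρ (n + 1)).2 - (ρ n).2⟩

theorem memoryAt_eq (ρ : ℕ → Conf U d) (n : ℕ) :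
    memoryAt Λ ρ n = ⟨stack (entry Λ ρ) n, cycleWeights (entry Λ ρ) n⟩ := by
  induction n with
  | zero => rfl
  | succ n ih =>
    have hsucc : memoryAt Λ ρ (n + 1) = (memoryAt Λ ρ n).update Λ (ρ n) (ρ (n + 1)) := by
      rw [memoryAt, hist_succ, List.reverse_append]
      rfl
    have hentry : entry Λ ρ n =
      ⟨(ρ n).1, Λ (memoryAt Λ ρ n) (ρ n).1, (ρ (n + 1)).2 - (ρ n).2⟩ := rfl
    rw [hsucc, Memory.update, ← hentry, ih, cycleWeights_succ]
    rfl

theorem entry_label (ρ : ℕ → Conf U d) (n : ℕ) : (entry Λ ρ n).label =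
    Λ ⟨stack (entry Λ ρ) n, cycleWeights (entry Λ ρ) n⟩ (entry Λ ρ n).vertex := by
  rw [← memoryAt_eq]
  rfl

theorem snd_eq_sum_cycleWeights_add {ρ : ℕ → Conf U d} (hρ : (ρ 0).2 = 0) (n : ℕ) :
    (ρ n).2 = (cycleWeights (entry Λ ρ) n).sum + totalWeight (stack (entry Λ ρ) n) := by
  rw [← sum_weight_eq]
  simp only [entry]
  rw [Finset.sum_range_sub fun j => (ρ j).2, hρ, sub_zero]

end Memory

/-! ### Strategies -/

section Strategies

variable {G : MWG V d} {P : Set V} {v₀ : V} {ρ : ℕ → Conf V d} {σ τ : Strat V d}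

theorem vnorm_le_enorm {v v' : V} {w : Fin d → ℤ} (h : (v, w, v') ∈ G.E) : vnorm w ≤ enorm G :=
  Finset.le_sup (f := fun e : V × (Fin d → ℤ) × V => vnorm e.2.1) (G.finE.mem_toFinset.2 h)

theorem one_le_of_enorm_pos (hE : 0 < enorm G) : 1 ≤ d := by
  rw [Nat.one_le_iff_ne_zero]
  rintro rfl
  simp [_root_.enorm, vnorm] at hE

theorem vnorm_eq_zero_of_enorm_eq_zero (hρ : IsPlay G v₀ ρ) (hE : enorm G = 0) (n : ℕ) :
    vnorm (ρ n).2 = 0 := by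
  rw [← Nat.le_zero]
  induction n with
  | zero => rw [hρ.1, vnorm_zero]
  | succ n ih =>
    have hstep : vnorm ((ρ (n + 1)).2 - (ρ n).2) ≤ 0 := hE ▸ vnorm_le_enorm (hρ.2 n)
    rw [← sub_add_cancel (ρ (n + 1)).2 (ρ n).2]
    exact (vnorm_add_le _ _).trans (Nat.add_le_add hstep ih)

theorem vnorm_entry_weight_le (hρ : IsPlay G v₀ ρ) (Λ : Labelling V d) (n : ℕ) :
    vnorm (entry Λ ρ n).weight ≤ enorm G :=
  vnorm_le_enorm (hρ.2 n)

theorem vnorm_le_add_card_mul_enorm (hρ : IsPlay G v₀ ρ) (Λ : Labelling V d) (n : ℕ) :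
    vnorm (ρ n).2 ≤ vnorm (cycleWeights (entry Λ ρ) n).sum + Fintype.card V * enorm G := by
  rw [snd_eq_sum_cycleWeights_add Λ (congrArg Prod.snd hρ.1)]
  exact (vnorm_add_le _ _).trans <| Nat.add_le_add_left
    (vnorm_totalWeight_le_of_infix (vnorm_entry_weight_le hρ Λ) (List.suffix_cons _ _).isInfix) _

theorem vnorm_sum_cycleWeights_le (hρ : IsPlay G v₀ ρ) (Λ : Labelling V d) (n : ℕ) :
    vnorm (cycleWeights (entry Λ ρ) n).sum ≤ vnorm (ρ n).2 + Fintype.card V * enorm G := by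
  rw [eq_sub_of_add_eq (snd_eq_sum_cycleWeights_add Λ (congrArg Prod.snd hρ.1) n).symm,
    sub_eq_add_neg]
  refine (vnorm_add_le _ _).trans (Nat.add_le_add_left ?_ _)
  rw [vnorm_neg]
  exact vnorm_totalWeight_le_of_infix (vnorm_entry_weight_le hρ Λ) (List.suffix_cons _ _).isInfix

theorem vnorm_le_of_mem_cycleWeights (hρ : IsPlay G v₀ ρ) (Λ : Labelling V d) {n : ℕ}
    {u : Fin d → ℤ} (hu : u ∈ cycleWeights (entry Λ ρ) n) :
    vnorm u ≤ Fintype.card V * enorm G := by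
  obtain ⟨j, -, rfl⟩ := List.mem_map.1 hu
  have hprefix : cycle (entry Λ ρ) j <+: entry Λ ρ j :: stack (entry Λ ρ) j :=
    ⟨_, cycle_append_stack_succ _ j⟩
  exact vnorm_totalWeight_le_of_infix (vnorm_entry_weight_le hρ Λ) hprefix.isInfix

theorem holds_after_each_move {α : Type*} [DecidableEq α] {e : ℕ → Entry α d}
    {W A : List (Entry α d) → α → Prop} (hinit : W [] (e 0).vertex)
    (hmove : ∀ n, W (stack e n) (e n).vertex → A (e n :: stack e n) (e (n + 1)).vertex)
    (hopen : ∀ st v, A st v → closedCycle v st = [] → W st v) (n : ℕ) :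
    A (e n :: stack e n) (e (n + 1)).vertex := by
  suffices ∀ n, W (stack e n) (e n).vertex from hmove n (this n)
  intro n
  induction n using Nat.strong_induction_on with
  | _ n ih =>
    cases n with
    | zero => exact hinit
    | succ n =>
      rcases cycle_eq_nil_or_exists_last e n with hnil | ⟨j, hj, -, -, hstack, hvertex⟩
      · have happend := cycle_append_stack_succ e n
        rw [hnil, List.nil_append] at happend
        rw [happend]
        exact hopen _ _ (hmove n (ih n n.lt_succ_self)) hnil
      · rw [← hstack, ← hvertex]
        exact ih j (Nat.lt_succ_of_le hj)

theorem exists_strategy_of_invariant {Λ : Labelling V d} {W A : List (Entry V d) → V → Prop}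
    (hinit : W [] v₀)
    (hown : ∀ m v, W m.stack v → v ∈ P →
      ∃ w v', (v, w, v') ∈ G.E ∧ A (⟨v, Λ m v, w⟩ :: m.stack) v')
    (hopp : ∀ m v, W m.stack v → v ∉ P →
      ∀ w v', (v, w, v') ∈ G.E → A (⟨v, Λ m v, w⟩ :: m.stack) v')
    (hopen : ∀ st v, A st v → closedCycle v st = [] → W st v) :
    ∃ σ, ValidStrat G P σ ∧ ∀ ρ, IsPlay G v₀ ρ → Consistent P σ ρ →
      ∀ n, A (entry Λ ρ n :: stack (entry Λ ρ) n) (ρ (n + 1)).1 := by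
  have hmove (m : Memory V d) (v : V) : ∃ s : (Fin d → ℤ) × V, (v, s.1, s.2) ∈ G.E ∧
      (W m.stack v → v ∈ P → A (⟨v, Λ m v, s.1⟩ :: m.stack) s.2) := by
    by_cases hv : W m.stack v ∧ v ∈ P
    · obtain ⟨w, v', hedge, hA⟩ := hown m v hv.1 hv.2
      exact ⟨(w, v'), hedge, fun _ _ => hA⟩
    · obtain ⟨w, v', hedge⟩ := G.serial v
      exact ⟨(w, v'), hedge, fun hW hP => absurd ⟨hW, hP⟩ hv⟩
  choose move hedge hA using hmove
  refine ⟨fun h c => move (memory Λ (c :: h.reverse)) c.1, fun h c _ _ => hedge _ _,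
    fun ρ hρ hσ => holds_after_each_move (e := entry Λ ρ) ?_ (fun n hW => ?_) hopen⟩
  · rwa [entry, hρ.1]
  change W (stack (entry Λ ρ) n) (ρ n).1 at hW
  have hstack : (memoryAt Λ ρ n).stack = stack (entry Λ ρ) n := by rw [memoryAt_eq]
  rw [← hstack] at hW ⊢
  by_cases hv : (ρ n).1 ∈ P
  · have hnext : ρ (n + 1) = ((move (memoryAt Λ ρ n) (ρ n).1).2,
      (ρ n).2 + (move (memoryAt Λ ρ n) (ρ n).1).1) := hσ n hv
    have hafter := hA _ _ hW hv
    simpa only [entry, hnext, add_sub_cancel_left] using hafter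
  · exact hopp _ _ hW hv _ _ (hρ.2 n)

theorem exists_play (v₀ : V) (hσ : ValidStrat G P σ) (hτ : ValidStrat G Pᶜ τ) :
    ∃ ρ, IsPlay G v₀ ρ ∧ Consistent P σ ρ ∧ Consistent Pᶜ τ ρ := by
  classical
  let move (h : List (Conf V d)) (c : Conf V d) := if c.1 ∈ P then σ h c else τ h c
  let next (s : List (Conf V d) × Conf V d) : List (Conf V d) × Conf V d :=
    (s.1 ++ [s.2], (move s.1 s.2).2, s.2.2 + (move s.1 s.2).1)
  let ρ (n : ℕ) : Conf V d := (next^[n] ([], v₀, 0)).2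
  have hhist (n : ℕ) : (next^[n] ([], v₀, 0)).1 = hist ρ n := by
    induction n with
    | zero => rfl
    | succ n ih =>
      rw [Function.iterate_succ_apply', hist_succ, ← ih]
  have hnext (n : ℕ) : ρ (n + 1) =
      ((move (hist ρ n) (ρ n)).2, (ρ n).2 + (move (hist ρ n) (ρ n)).1) := by
    rw [← hhist]
    exact congrArg Prod.snd (Function.iterate_succ_apply' next n _)
  have hstep (n : ℕ) (hpath : IsPathL G (hist ρ n ++ [ρ n])) : Step G (ρ n) (ρ (n + 1)) := by
    rw [Step, hnext, add_sub_cancel_left]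
    by_cases hv : (ρ n).1 ∈ P
    · simpa only [move, if_pos hv] using hσ _ _ hpath hv
    · simpa only [move, if_neg hv] using hτ _ _ hpath hv
  have hpath (n : ℕ) : IsPathL G (hist ρ n ++ [ρ n]) := by
    induction n with
    | zero => exact List.isChain_singleton _
    | succ n ih =>
      rw [hist_succ]
      refine List.isChain_append.2 ⟨ih, List.isChain_singleton _, ?_⟩
      simpa using hstep n ih
  refine ⟨ρ, ⟨rfl, fun n => hstep n (hpath n)⟩, fun n hv => ?_, fun n hv => ?_⟩
  · simpa only [move, if_pos hv] using hnext n
  · simpa only [move, if_neg hv] using hnext n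

theorem not_p1WinsBounding_of_p2WinsBounding (h : P2WinsBounding G v₀) :
    ¬ P1WinsBounding G v₀ := by
  rintro ⟨σ, hσ, hwin⟩
  obtain ⟨τ, hτ, hlose⟩ := h
  obtain ⟨ρ, hρ, hρσ, hρτ⟩ := exists_play v₀ hσ hτ
  exact hlose ρ hρ hρτ (hwin ρ hρ hρσ)

end Strategies

/-! ### The cycle game -/

mutual

/-- Player 2 wins the first-cycle game from `v` after the moves `st`, latest first. Each round,
Player 2 picks a label for the next move and the owner of the current vertex makes the move; the
play stops at the first closed cycle, and Player 2 wins if this cycle is escaping. -/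
inductive P2WinsCycleGame (G : MWG V d) : List (Entry V d) → V → Prop
  | ofP1 {st : List (Entry V d)} {v : V} (L : List (Fin d → ℤ)) (hv : v ∈ G.P1)
      (hmove : ∀ w v', (v, w, v') ∈ G.E → P2WinsAfterMove G (⟨v, L, w⟩ :: st) v') :
      P2WinsCycleGame G st v
  | ofP2 {st : List (Entry V d)} {v : V} (L : List (Fin d → ℤ)) (hv : v ∉ G.P1)
      {w : Fin d → ℤ} {v' : V} (hedge : (v, w, v') ∈ G.E)
      (hmove : P2WinsAfterMove G (⟨v, L, w⟩ :: st) v') : P2WinsCycleGame G st v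

/-- Player 2 wins the first-cycle game when the moves `st` have just led to `v`, the cycle thereby
closed, if any, not being cut out yet. -/
inductive P2WinsAfterMove (G : MWG V d) : List (Entry V d) → V → Prop
  | ofEscaping {st : List (Entry V d)} {v : V} (hesc : Escaping (closedCycle v st)) :
      P2WinsAfterMove G st v
  | ofOpen {st : List (Entry V d)} {v : V} (hopen : closedCycle v st = [])
      (hwin : P2WinsCycleGame G st v) : P2WinsAfterMove G st v

end

section CycleGame

variable {G : MWG V d} {v₀ : V}

theorem P2WinsCycleGame.exists_label {st : List (Entry V d)} {v : V}
    (h : P2WinsCycleGame G st v) : ∃ L,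
      (v ∈ G.P1 → ∀ w v', (v, w, v') ∈ G.E → P2WinsAfterMove G (⟨v, L, w⟩ :: st) v') ∧
      (v ∉ G.P1 → ∃ w v', (v, w, v') ∈ G.E ∧ P2WinsAfterMove G (⟨v, L, w⟩ :: st) v') := by
  cases h with
  | ofP1 L hv hmove => exact ⟨L, fun _ => hmove, fun hv' => absurd hv hv'⟩
  | ofP2 L hv hedge hmove => exact ⟨L, fun hv' => absurd hv' hv, fun _ => ⟨_, _, hedge, hmove⟩⟩

theorem P2WinsAfterMove.win_of_open {st : List (Entry V d)} {v : V}
    (h : P2WinsAfterMove G st v) (hopen : closedCycle v st = []) : P2WinsCycleGame G st v := by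
  cases h with
  | ofEscaping hesc => exact absurd (hopen ▸ hesc) not_escaping_nil
  | ofOpen _ hwin => exact hwin

theorem P2WinsAfterMove.escaping {st : List (Entry V d)} {v : V}
    (h : P2WinsAfterMove G st v) (hne : closedCycle v st ≠ []) : Escaping (closedCycle v st) := by
  cases h with
  | ofEscaping hesc => exact hesc
  | ofOpen hopen _ => exact absurd hopen hne

theorem P2WinsCycleGame.p2WinsBounding (h : P2WinsCycleGame G [] v₀) : P2WinsBounding G v₀ := by
  choose! ℓ hp1 hp2 using fun st v => P2WinsCycleGame.exists_label (G := G) (st := st) (v := v)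
  obtain ⟨τ, hτ, hafter⟩ := exists_strategy_of_invariant (P := {v | v ∉ G.P1})
    (Λ := fun m => ℓ m.stack) h (fun m v hW => hp2 _ _ hW)
    (fun m v hW hv => hp1 _ _ hW (not_not.1 hv)) (fun _ _ => P2WinsAfterMove.win_of_open)
  refine ⟨τ, hτ, fun ρ hρ hρτ ⟨B, hB⟩ => ?_⟩
  obtain ⟨n, hn⟩ := exists_lt_vnorm_sum_cycleWeights (entry_label _ ρ)
    (fun n => (hafter ρ hρ hρτ n).escaping) (B + Fintype.card V * enorm G)
  exact hn.not_ge ((vnorm_sum_cycleWeights_le hρ _ n).trans (Nat.add_le_add_right (hB n) _))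

theorem exists_compliant_strategy (h : ¬ P2WinsCycleGame G [] v₀) (κ : Controller d) :
    ∃ σ, ValidStrat G (G.P1 : Set V) σ ∧ ∀ ρ, IsPlay G v₀ ρ → Consistent (G.P1 : Set V) σ ρ →
      ∀ n, Compliant (Fintype.card V) κ
        (cycleWeights (entry (fun m _ => κ m.cycleWeights) ρ) n) := by
  have hp1 (m : Memory V d) (v : V) (hW : ¬ P2WinsCycleGame G m.stack v) (hv : v ∈ G.P1) :
      ∃ w v', (v, w, v') ∈ G.E ∧ ¬ P2WinsAfterMove G (⟨v, κ m.cycleWeights, w⟩ :: m.stack) v' := by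
    by_contra! hA
    exact hW (.ofP1 _ hv hA)
  obtain ⟨σ, hσ, hafter⟩ := exists_strategy_of_invariant (P := (G.P1 : Set V))
    (Λ := fun m _ => κ m.cycleWeights) (W := fun st v => ¬ P2WinsCycleGame G st v)
    (A := fun st v => ¬ P2WinsAfterMove G st v) h hp1
    (fun _ _ hW hv _ _ hedge hA => hW (.ofP2 _ hv hedge hA))
    (fun _ _ hA hopen hwin => hA (.ofOpen hopen hwin))
  exact ⟨σ, hσ, fun ρ hρ hρσ => compliant_cycleWeights (entry_label _ ρ)
    fun n hesc => hafter ρ hρ hρσ n (.ofEscaping hesc)⟩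

theorem exists_bounding_strategy {κ : Controller d} {B : ℕ}
    (hκ : Confines (Fintype.card V) (Fintype.card V * enorm G) ⊤ κ B)
    (h : ¬ P2WinsCycleGame G [] v₀) :
    ∃ σ, ValidStrat G (G.P1 : Set V) σ ∧ ∀ ρ, IsPlay G v₀ ρ → Consistent (G.P1 : Set V) σ ρ →
      ∀ n, vnorm (ρ n).2 ≤ B + Fintype.card V * enorm G := by
  obtain ⟨σ, hσ, hcompliant⟩ := exists_compliant_strategy h κ
  refine ⟨σ, hσ, fun ρ hρ hρσ n => ?_⟩
  have hcycles := hκ _ (fun u hu => ⟨vnorm_le_of_mem_cycleWeights hρ _ hu, Submodule.mem_top⟩)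
    (hcompliant ρ hρ hρσ n)
  exact (vnorm_le_add_card_mul_enorm hρ _ n).trans (Nat.add_le_add_right hcycles _)

end CycleGame

end BoundingGame

theorem bounding_iff_safety_with_small_hypercube_general
    (V : Type) [Fintype V] [DecidableEq V] (d : ℕ) (G : MWG V d) (v₀ : V) :
    P1WinsBounding G v₀ ↔
      ∃ σ : Strat V d, ValidStrat G (G.P1 : Set V) σ ∧
        ∀ ρ, IsPlay G v₀ ρ → Consistent (G.P1 : Set V) σ ρ →
          ∀ n, vnorm ((ρ n).2) ≤ (4 * Fintype.card V * enorm G) ^ (2 * (d + 2)^3) := by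
  refine ⟨fun hwin => ?_, fun ⟨σ, hσ, hsafe⟩ => ⟨σ, hσ, fun ρ hρ hρσ => ⟨_, hsafe ρ hρ hρσ⟩⟩⟩
  rcases Nat.eq_zero_or_pos (enorm G) with hE | hE
  · obtain ⟨σ, hσ, -⟩ := hwin
    exact ⟨σ, hσ, fun ρ hρ _ n => (BoundingGame.vnorm_eq_zero_of_enorm_eq_zero hρ hE n).le.trans
      (Nat.zero_le _)⟩
  have hd : 1 ≤ d := BoundingGame.one_le_of_enorm_pos hE
  have hV : 1 ≤ Fintype.card V := Fintype.card_pos_iff.2 ⟨v₀⟩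
  have hN : 1 ≤ Fintype.card V * enorm G := Nat.mul_pos hV hE
  obtain ⟨κ, hκ⟩ := BoundingGame.exists_confines hd hN (Nat.le_mul_of_pos_right _ hE)
    (F := ⊤) (n := d) (by simp)
  obtain ⟨σ, hσ, hsafe⟩ := BoundingGame.exists_bounding_strategy hκ
    fun h => BoundingGame.not_p1WinsBounding_of_p2WinsBounding h.p2WinsBounding hwin
  refine ⟨σ, hσ, fun ρ hρ hρσ n => (hsafe ρ hρ hρσ n).trans ?_⟩
  rw [mul_assoc 4]
  exact BoundingGame.pow_add_le_hypercube hd hN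

/-- with `B := (4|V|·‖E‖)^(2(d+2)³)`, Player 1 wins the
bounding game from `v₀` iff she has a strategy from `v₀` such that every
consistent play `ρ` satisfies `‖w(ρ|ₙ)‖ ≤ B` for all `n` (so the bounding
game is equivalent to the safety game where Player 2 attempts to see the
norm of the total weight exceed `B`). -/
theorem bounding_iff_safety_with_small_hypercube
    (V : Type) [Fintype V] [DecidableEq V] (d : ℕ) (G : MWG V d)
    (hE : 0 < enorm G) (hcyc : EveryCycleHasP1 G) (v₀ : V) :
    P1WinsBounding G v₀ ↔
      ∃ σ : Strat V d, ValidStrat G (G.P1 : Set V) σ ∧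
        ∀ ρ, IsPlay G v₀ ρ → Consistent (G.P1 : Set V) σ ρ →
          ∀ n, vnorm ((ρ n).2) ≤ (4 * Fintype.card V * enorm G) ^ (2 * (d + 2)^3) :=
  bounding_iff_safety_with_small_hypercube_general V d G v₀
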